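/- arXiv:math/0411339 — 2 statements merged into one kernel-verified Lean document; each statement's English description precedes it below -/
import Mathlib

section
/- Fix integers d ≥ 1 and D ≥ 1, and constants θ > 1 and M > 0. Let f_1, f_2, … be polynomials of one complex variable of degree at most D of the form f_n(z) = λ_n z + (terms of degree ≥ 2), with θ ≤ |λ_n| ≤ M and all coefficients of f_n bounded in absolute value by M. Let g_n(z) = λ_n^{-1} z, and for a polynomial X let φ_n(X) be the polynomial obtained from g_n ∘ X ∘ f_n by discarding all terms of degree strictly greater than d. Then there exists a constant C > 0 and a sequence X_0, X_1, X_2, … of polynomials of the form X(z) = z + Σ_{j=2}^{d} c_j z^j, with X_n = φ_n(X_{n−1}) for every n ≥ 1, such that all coefficients of all the X_n are bounded in absolute value by C. -/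
open Polynomial

noncomputable section

/-- Truncation of a one-variable polynomial: discard all terms of degree `> d`. -/
def truncPoly (d : ℕ) (p : Polynomial ℂ) : Polynomial ℂ :=
  ∑ j ∈ Finset.range (d + 1), Polynomial.C (p.coeff j) * Polynomial.X ^ j

/-!
The coefficients of the orbit are found one degree at a time. Since `f_n(z) = λ_n z + ⋯`, adding
`s_n z^m` to `X_n` changes no coefficient of `X_n ∘ f_n` below degree `m`, and changes the one in
degree `m` by `λ_n^m s_n`. Hence an orbit truncated in degree `m - 1` extends to one truncated in
degree `m` as soon as `s_{n+1} = λ_n^(m-1) s_n + b_n`, where `b_n` depends on the lower coefficients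
only and is bounded. For `m ≥ 2` this recurrence is uniformly expanding, so solving it backwards,
`s_n = λ_n^(1-m) (s_{n+1} - b_n)`, is a contraction on bounded sequences, and its fixed point is
the required bounded solution.
-/

open scoped NNReal BoundedContinuousFunction

section Recurrence

variable {𝕜 E : Type*} [NormedDivisionRing 𝕜] [NormedAddCommGroup E] [Module 𝕜 E]
  [NormSMulClass 𝕜 E]

/-- The operator `s ↦ (n ↦ (a n)⁻¹ • (s (n + 1) - b n))` on bounded sequences, whose fixed points
are the bounded solutions of `s (n + 1) = a n • s n + b n`. The topology of `ℕ` being discrete,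
`ℕ →ᵇ E` is the space of all bounded sequences. -/
def backwardStep {θ : ℝ} (hθ : 0 < θ) {a : ℕ → 𝕜} (ha : ∀ n, θ ≤ ‖a n‖) (b s : ℕ →ᵇ E) :
    ℕ →ᵇ E :=
  .ofNormedAddCommGroupDiscrete (fun n => (a n)⁻¹ • (s (n + 1) - b n)) (θ⁻¹ * (‖s‖ + ‖b‖))
    fun n => by
      rw [norm_smul, norm_inv]
      gcongr
      · exact ha n
      · exact norm_sub_le_of_le (s.norm_coe_le_norm _) (b.norm_coe_le_norm _)

theorem contractingWith_backwardStep {θ : ℝ≥0} (hθ : 1 < θ) {a : ℕ → 𝕜} (ha : ∀ n, θ ≤ ‖a n‖)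
    (b : ℕ →ᵇ E) :
    ContractingWith θ⁻¹ (backwardStep (zero_lt_one.trans hθ) ha b) := by
  refine ⟨inv_lt_one_of_one_lt₀ hθ, LipschitzWith.of_dist_le_mul fun s t => ?_⟩
  refine (BoundedContinuousFunction.dist_le (by positivity)).2 fun n => ?_
  calc dist ((a n)⁻¹ • (s (n + 1) - b n)) ((a n)⁻¹ • (t (n + 1) - b n))
      = ‖a n‖⁻¹ * dist (s (n + 1)) (t (n + 1)) := by
        rw [dist_smul₀, dist_sub_right, norm_inv]
    _ ≤ θ⁻¹ * dist s t := by
        gcongr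
        · exact inv_anti₀ (zero_lt_one.trans hθ) (ha n)
        · exact s.dist_coe_le_dist _

theorem exists_bounded_forall_succ_eq_smul_add [CompleteSpace E] {θ : ℝ} (hθ : 1 < θ)
    {a : ℕ → 𝕜} (ha : ∀ n, θ ≤ ‖a n‖) {b : ℕ → E} {B : ℝ} (hb : ∀ n, ‖b n‖ ≤ B) :
    ∃ s : ℕ → E, (∀ n, s (n + 1) = a n • s n + b n) ∧ ∃ K, ∀ n, ‖s n‖ ≤ K := by
  lift θ to ℝ≥0 using by positivity
  let b' : ℕ →ᵇ E := .ofNormedAddCommGroupDiscrete b B hb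
  have hcontr := contractingWith_backwardStep hθ ha b'
  let s := hcontr.fixedPoint
  refine ⟨s, fun n => ?_, ‖s‖, s.norm_coe_le_norm⟩
  have ha₀ : a n ≠ 0 := norm_pos_iff.1 <| (zero_lt_one.trans hθ).trans_le (ha n)
  have hfix : (a n)⁻¹ • (s (n + 1) - b n) = s n :=
    DFunLike.congr_fun hcontr.fixedPoint_isFixedPt n
  rw [← hfix, smul_inv_smul₀ ha₀, sub_add_cancel]

end Recurrence

section Composition

variable {R : Type*} [CommSemiring R] {p q : R[X]}

theorem coeff_pow_eq_zero_of_lt (hq : q.coeff 0 = 0) {j m : ℕ} (hj : j < m) :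
    (q ^ m).coeff j = 0 := by
  obtain ⟨r, rfl⟩ := X_dvd_iff.2 hq
  rw [mul_pow, coeff_X_pow_mul', if_neg hj.not_ge]

theorem coeff_pow_self_of_coeff_zero_eq_zero (hq : q.coeff 0 = 0) (m : ℕ) :
    (q ^ m).coeff m = q.coeff 1 ^ m := by
  obtain ⟨r, rfl⟩ := X_dvd_iff.2 hq
  rw [mul_pow, coeff_X_pow_mul', if_pos le_rfl, Nat.sub_self, coeff_X_mul,
    coeff_zero_eq_eval_zero, coeff_zero_eq_eval_zero, eval_pow]

theorem coeff_add_monomial_comp_of_lt (hq : q.coeff 0 = 0) (a : R) {j m : ℕ} (hj : j < m) :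
    ((p + monomial m a).comp q).coeff j = (p.comp q).coeff j := by
  rw [add_comp, monomial_comp, coeff_add, coeff_C_mul, coeff_pow_eq_zero_of_lt hq hj, mul_zero,
    add_zero]

theorem coeff_add_monomial_comp_self (hq : q.coeff 0 = 0) (a : R) (m : ℕ) :
    ((p + monomial m a).comp q).coeff m = (p.comp q).coeff m + a * q.coeff 1 ^ m := by
  rw [add_comp, monomial_comp, coeff_add, coeff_C_mul, coeff_pow_self_of_coeff_zero_eq_zero hq]

end Composition

/-- A family of polynomials is coefficientwise bounded if, in each degree separately, its
coefficients are bounded uniformly over the family. Neither the bounds in different degrees nor the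
degrees of the polynomials are related to each other. -/
def CoeffwiseBounded {ι R : Type*} [SeminormedRing R] (p : ι → R[X]) : Prop :=
  ∀ j, ∃ K : ℝ, ∀ i, ‖(p i).coeff j‖ ≤ K

namespace CoeffwiseBounded

variable {ι R : Type*} [SeminormedRing R] {p q : ι → R[X]}

theorem const (p : R[X]) : CoeffwiseBounded fun _ : ι => p :=
  fun j => ⟨‖p.coeff j‖, fun _ => le_rfl⟩

theorem add (hp : CoeffwiseBounded p) (hq : CoeffwiseBounded q) :
    CoeffwiseBounded fun i => p i + q i := fun j => by
  obtain ⟨K, hK⟩ := hp j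
  obtain ⟨L, hL⟩ := hq j
  exact ⟨K + L, fun i => coeff_add (p i) (q i) j ▸ norm_add_le_of_le (hK i) (hL i)⟩

theorem sum {κ : Type*} (s : Finset κ) {p : κ → ι → R[X]}
    (hp : ∀ k, CoeffwiseBounded (p k)) : CoeffwiseBounded fun i => ∑ k ∈ s, p k i := fun j => by
  choose K hK using fun k => hp k j
  refine ⟨∑ k ∈ s, K k, fun i => ?_⟩
  rw [finsetSum_coeff]
  exact norm_sum_le_of_le s fun k _ => hK k i

theorem mul (hp : CoeffwiseBounded p) (hq : CoeffwiseBounded q) :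
    CoeffwiseBounded fun i => p i * q i := fun j => by
  choose K hK using hp
  choose L hL using hq
  refine ⟨∑ x ∈ Finset.HasAntidiagonal.antidiagonal j, K x.1 * L x.2, fun i => ?_⟩
  rw [coeff_mul]
  exact norm_sum_le_of_le _ fun x _ => norm_mul_le_of_le (hK x.1 i) (hL x.2 i)

theorem pow (hp : CoeffwiseBounded p) : ∀ m : ℕ, CoeffwiseBounded fun i => p i ^ m
  | 0 => by simpa only [pow_zero] using const 1
  | m + 1 => by simpa only [pow_succ] using (hp.pow m).mul hp

theorem monomial {a : ι → R} {K : ℝ} (ha : ∀ i, ‖a i‖ ≤ K) (m : ℕ) :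
    CoeffwiseBounded fun i => Polynomial.monomial m (a i) := fun j => by
  by_cases hj : m = j
  · exact ⟨K, fun i => by simpa only [coeff_monomial, if_pos hj] using ha i⟩
  · exact ⟨0, fun i => by simp only [coeff_monomial, if_neg hj, norm_zero, le_rfl]⟩

theorem comp (hp : CoeffwiseBounded p) {d : ℕ} (hdeg : ∀ i, (p i).natDegree ≤ d)
    (hq : CoeffwiseBounded q) : CoeffwiseBounded fun i => (p i).comp (q i) := by
  have hcomp (i) : (p i).comp (q i) =
      ∑ k ∈ Finset.range (d + 1), Polynomial.monomial 0 ((p i).coeff k) * q i ^ k :=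
    eval₂_eq_sum_range' C (Nat.lt_succ_of_le (hdeg i)) (q i)
  simp only [hcomp]
  refine sum _ fun k => ?_
  obtain ⟨K, hK⟩ := hp k
  exact (monomial hK 0).mul (hq.pow k)

theorem exists_uniform_bound (hp : CoeffwiseBounded p) {d : ℕ}
    (hdeg : ∀ i, (p i).natDegree ≤ d) : ∃ C : ℝ, 0 < C ∧ ∀ i j, ‖(p i).coeff j‖ ≤ C := by
  choose K hK using hp
  obtain ⟨B, hB⟩ := ((Finset.range (d + 1)).image K).exists_le
  refine ⟨max B 1, lt_max_of_lt_right one_pos, fun i j => ?_⟩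
  rcases le_or_gt j d with hj | hj
  · have hKB : K j ≤ B := hB _ (Finset.mem_image_of_mem K (Finset.mem_range_succ_iff.2 hj))
    exact (hK j i).trans (hKB.trans (le_max_left B 1))
  · rw [coeff_eq_zero_of_natDegree_lt ((hdeg i).trans_lt hj), norm_zero]
    exact zero_le_one.trans (le_max_right B 1)

end CoeffwiseBounded

/-- `P` is an orbit, of polynomials `z + ∑ j ∈ [2, d], c_j z ^ j`, under the maps sending a
polynomial `Q` to the truncation in degree `d` of `λ_n⁻¹ • (Q ∘ f_n)`, where `λ_n` is the linear
coefficient of `f_n`. The truncation is expressed by comparing coefficients up to degree `d`. -/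
structure IsTruncatedOrbit {𝕜 : Type*} [Field 𝕜] (f : ℕ → 𝕜[X]) (d : ℕ) (P : ℕ → 𝕜[X]) :
    Prop where
  coeff_zero : ∀ n, (P n).coeff 0 = 0
  coeff_one : ∀ n, (P n).coeff 1 = 1
  natDegree_le : ∀ n, (P n).natDegree ≤ d
  coeff_succ : ∀ n, ∀ j ≤ d,
    (P (n + 1)).coeff j = ((f n).coeff 1)⁻¹ * ((P n).comp (f n)).coeff j

theorem coeff_truncPoly (d : ℕ) (p : ℂ[X]) (j : ℕ) :
    (truncPoly d p).coeff j = if j ≤ d then p.coeff j else 0 := by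
  simp [truncPoly, coeff_X_pow]

namespace IsTruncatedOrbit

theorem succ_eq_truncPoly {f P : ℕ → ℂ[X]} {d : ℕ} (hP : IsTruncatedOrbit f d P) (n : ℕ) :
    P (n + 1) = truncPoly d (C ((f n).coeff 1)⁻¹ * (P n).comp (f n)) := by
  ext j
  rw [coeff_truncPoly, coeff_C_mul]
  split_ifs with hj
  · exact hP.coeff_succ n j hj
  · exact coeff_eq_zero_of_natDegree_lt ((hP.natDegree_le _).trans_lt (not_le.1 hj))

variable {𝕜 : Type*} [Field 𝕜] {f P : ℕ → 𝕜[X]} {d : ℕ}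

theorem const_X (hconst : ∀ n, (f n).coeff 0 = 0) (hlin : ∀ n, (f n).coeff 1 ≠ 0) :
    IsTruncatedOrbit f 1 fun _ => X where
  coeff_zero _ := coeff_X_zero
  coeff_one _ := coeff_X_one
  natDegree_le _ := natDegree_X_le
  coeff_succ n j hj := by
    rw [X_comp]
    interval_cases j
    · rw [coeff_X_zero, hconst, mul_zero]
    · rw [coeff_X_one, inv_mul_cancel₀ (hlin n)]

theorem add_monomial (hP : IsTruncatedOrbit f d P) (hd : 1 ≤ d)
    (hconst : ∀ n, (f n).coeff 0 = 0) (hlin : ∀ n, (f n).coeff 1 ≠ 0) {s : ℕ → 𝕜}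
    (hs : ∀ n, s (n + 1) = (f n).coeff 1 ^ d * s n +
      ((f n).coeff 1)⁻¹ * ((P n).comp (f n)).coeff (d + 1)) :
    IsTruncatedOrbit f (d + 1) fun n => P n + monomial (d + 1) (s n) where
  coeff_zero n := by
    rw [coeff_add, hP.coeff_zero, coeff_monomial_of_ne _ (by lia), add_zero]
  coeff_one n := by
    rw [coeff_add, hP.coeff_one, coeff_monomial_of_ne _ (by lia), add_zero]
  natDegree_le n :=
    natDegree_add_le_of_degree_le ((hP.natDegree_le n).trans d.le_succ) (natDegree_monomial_le _)
  coeff_succ n j hj := by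
    rcases hj.lt_or_eq with hlt | rfl
    · rw [coeff_add, coeff_monomial_of_ne _ hlt.ne, add_zero,
        coeff_add_monomial_comp_of_lt (hconst n) _ hlt, hP.coeff_succ n j (Nat.le_of_lt_succ hlt)]
    · have hvanish : (P (n + 1)).coeff (d + 1) = 0 :=
        coeff_eq_zero_of_natDegree_lt (Nat.lt_succ_of_le (hP.natDegree_le _))
      rw [coeff_add, hvanish, coeff_monomial_same, coeff_add_monomial_comp_self (hconst n), hs]
      field [hlin n]

end IsTruncatedOrbit

section Expanding

variable {𝕜 : Type*} [NormedField 𝕜] [CompleteSpace 𝕜] {f : ℕ → 𝕜[X]} {θ : ℝ}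

theorem IsTruncatedOrbit.exists_succ_degree {P : ℕ → 𝕜[X]} {d : ℕ}
    (hP : IsTruncatedOrbit f d P) (hPb : CoeffwiseBounded P) (hd : 1 ≤ d) (hθ : 1 < θ)
    (hconst : ∀ n, (f n).coeff 0 = 0) (hlin : ∀ n, θ ≤ ‖(f n).coeff 1‖)
    (hf : CoeffwiseBounded f) :
    ∃ Q, IsTruncatedOrbit f (d + 1) Q ∧ CoeffwiseBounded Q := by
  have hlin_one (n) : 1 ≤ ‖(f n).coeff 1‖ := hθ.le.trans (hlin n)
  have hlin_ne (n) : (f n).coeff 1 ≠ 0 := norm_pos_iff.1 (zero_lt_one.trans_le (hlin_one n))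
  obtain ⟨K, hK⟩ := hPb.comp hP.natDegree_le hf (d + 1)
  have hexpanding (n) : θ ≤ ‖(f n).coeff 1 ^ d‖ := by
    rw [norm_pow]
    exact (hlin n).trans (le_self_pow₀ (hlin_one n) (Nat.one_le_iff_ne_zero.1 hd))
  have hforcing (n) : ‖((f n).coeff 1)⁻¹ * ((P n).comp (f n)).coeff (d + 1)‖ ≤ 1 * K :=
    norm_mul_le_of_le ((norm_inv _).trans_le (inv_le_one_of_one_le₀ (hlin_one n))) (hK n)
  obtain ⟨s, hs, L, hL⟩ := exists_bounded_forall_succ_eq_smul_add hθ hexpanding hforcing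
  exact ⟨_, hP.add_monomial hd hconst hlin_ne hs, hPb.add (.monomial hL (d + 1))⟩

theorem exists_isTruncatedOrbit_coeffwiseBounded {d : ℕ} (hd : 1 ≤ d) (hθ : 1 < θ)
    (hconst : ∀ n, (f n).coeff 0 = 0) (hlin : ∀ n, θ ≤ ‖(f n).coeff 1‖)
    (hf : CoeffwiseBounded f) :
    ∃ P, IsTruncatedOrbit f d P ∧ CoeffwiseBounded P := by
  induction d, hd using Nat.le_induction with
  | base =>
    have hlin_ne (n) : (f n).coeff 1 ≠ 0 :=
      norm_pos_iff.1 ((zero_lt_one.trans hθ).trans_le (hlin n))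
    exact ⟨_, .const_X hconst hlin_ne, .const X⟩
  | succ d hd ih =>
    obtain ⟨P, hP, hPb⟩ := ih
    exact hP.exists_succ_degree hPb hd hθ hconst hlin hf

theorem bounded_orbit_of_truncated_conjugations_general {d : ℕ} (hd : 1 ≤ d) (hθ : 1 < θ)
    (hconst : ∀ n, (f n).coeff 0 = 0) (hlin : ∀ n, θ ≤ ‖(f n).coeff 1‖)
    (hf : CoeffwiseBounded f) :
    ∃ C : ℝ, 0 < C ∧ ∃ P, IsTruncatedOrbit f d P ∧ ∀ n j, ‖(P n).coeff j‖ ≤ C := by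
  obtain ⟨P, hP, hPb⟩ := exists_isTruncatedOrbit_coeffwiseBounded hd hθ hconst hlin hf
  obtain ⟨C, hC, hPC⟩ := hPb.exists_uniform_bound hP.natDegree_le
  exact ⟨C, hC, P, hP, hPC⟩

end Expanding

/-- **Proposition (bounded orbits in ℂ).** Let `f_n(z) = λ_n z + h.o.t.` be polynomials of
degree `≤ D` with `1 < θ ≤ |λ_n| ≤ M` and all coefficients bounded by `M`, let
`g_n(z) = λ_n⁻¹ z` and `φ_n(X) = [g_n ∘ X ∘ f_n]_d` (truncation in degree `d`). Then there is
a bounded sequence `X_0, X_1, …` of polynomials of the form `z + Σ_{j=2}^d c_j z^j` with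
`X_n = φ_n(X_{n-1})` for every `n ≥ 1`. -/
theorem bounded_orbit_of_truncated_conjugations (d D : ℕ) (hd : 1 ≤ d) (hD : 1 ≤ D)
    (θ M : ℝ) (hθ : 1 < θ) (hM : 0 < M)
    (f : ℕ → Polynomial ℂ) (lam : ℕ → ℂ)
    (hdeg : ∀ n, (f n).natDegree ≤ D)
    (hconst : ∀ n, (f n).coeff 0 = 0)
    (hlin : ∀ n, (f n).coeff 1 = lam n)
    (hlam : ∀ n, θ ≤ ‖lam n‖ ∧ ‖lam n‖ ≤ M)
    (hcoef : ∀ n j, ‖(f n).coeff j‖ ≤ M) :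
    ∃ C : ℝ, 0 < C ∧ ∃ X : ℕ → Polynomial ℂ,
      (∀ n, (X n).coeff 0 = 0 ∧ (X n).coeff 1 = 1 ∧ (X n).natDegree ≤ d) ∧
      (∀ n, X (n + 1) = truncPoly d (Polynomial.C (lam n)⁻¹ * (X n).comp (f n))) ∧
      (∀ n j, ‖(X n).coeff j‖ ≤ C) := by
  obtain rfl : (fun n => (f n).coeff 1) = lam := funext hlin
  obtain ⟨C, hC, P, hP, hPC⟩ := bounded_orbit_of_truncated_conjugations_general hd hθ hconst
    (fun n => (hlam n).1) fun j => ⟨M, fun n => hcoef n j⟩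
  exact ⟨C, hC, P, fun n => ⟨hP.coeff_zero n, hP.coeff_one n, hP.natDegree_le n⟩,
    hP.succ_eq_truncPoly, hPC⟩
end
end

section
/- Let F_1, F_2, … be a uniformly attracting sequence of correctly ordered automorphisms of ℂ^k and let d ≥ 2. Then there exist a constant C > 0, a sequence X_0, X_1, … of polynomial self-maps of ℂ^k of degree at most d of the form X_n = identity + (terms of degree ≥ 2), with all coefficients of all X_n uniformly bounded, and a sequence G_1, G_2, … of lower triangular polynomial self-maps of ℂ^k of uniformly bounded degree with all coefficients uniformly bounded and with G_n′(0) = F_n′(0) for every n, such that ‖G_n(X_{n−1}(z)) − X_n(F_n(z))‖ ≤ C‖z‖^{d+1} for every n ≥ 1 and every z in the open unit ball of ℂ^k. -/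
open Metric Filter Topology

noncomputable section

/-- `ℂ^k` with the Euclidean norm. -/
abbrev Ck (k : ℕ) := EuclideanSpace ℂ (Fin k)

/-- An automorphism of `ℂ^k`: a bijective holomorphic map with holomorphic inverse. -/
def IsAutomorphism {k : ℕ} (F : Ck k → Ck k) : Prop :=
  Differentiable ℂ F ∧ ∃ Finv : Ck k → Ck k, Differentiable ℂ Finv ∧
    Function.LeftInverse Finv F ∧ Function.RightInverse Finv F

/-- The matrix of the derivative of `F` at `0` in the standard basis. -/
def derivMatrix {k : ℕ} (F : Ck k → Ck k) : Matrix (Fin k) (Fin k) ℂ :=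
  fun i j => fderiv ℂ F 0 (EuclideanSpace.single j 1) i

/-- `F` is in lower triangular form: `F'(0)` is lower triangular. -/
def LowerTriAtZero {k : ℕ} (F : Ck k → Ck k) : Prop :=
  ∀ i j : Fin k, i < j → derivMatrix F i j = 0

/-- `F` is correctly ordered. -/
def CorrectlyOrdered {k : ℕ} (F : Ck k → Ck k) : Prop :=
  LowerTriAtZero F ∧
    ∀ l j i : Fin k, l ≤ j →
      ‖derivMatrix F j j‖ * ‖derivMatrix F i i‖ < ‖derivMatrix F l l‖

/-- A sequence of correctly ordered automorphisms is uniformly attracting. -/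
def UniformlyAttracting {k : ℕ} (F : ℕ → Ck k → Ck k) : Prop :=
  ∃ a b : ℝ, 0 < a ∧ a < b ∧ b < 1 ∧
    (∀ n, ∀ z ∈ ball (0 : Ck k) 1, a * ‖z‖ ≤ ‖F n z‖ ∧ ‖F n z‖ ≤ b * ‖z‖) ∧
    ∃ ξ : ℝ, ξ < 1 ∧ ∀ n, ∀ l j i : Fin k, l ≤ j →
      ‖derivMatrix (F n) i i‖ * ‖derivMatrix (F n) j j‖ ≤ ξ * ‖derivMatrix (F n) l l‖

/-- The polynomial self-map of `ℂ^k` determined by a `k`-tuple of polynomials. -/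
def evalPolyMap {k : ℕ} (P : Fin k → MvPolynomial (Fin k) ℂ) : Ck k → Ck k :=
  fun z => (WithLp.equiv 2 (∀ _ : Fin k, ℂ)).symm
    (fun j => MvPolynomial.eval (fun i => z i) (P j))

/-- A polynomial map `G = (g_1, …, g_k)` with `G(0) = 0` is lower triangular if
`g_j(z) = c_j z_j + h_j(z_1, …, z_{j-1})`. -/
def LowerTriPolyMap {k : ℕ} (P : Fin k → MvPolynomial (Fin k) ℂ) : Prop :=
  ∀ j : Fin k, (P j).coeff 0 = 0 ∧
    ∀ d ∈ (P j).support, d = Finsupp.single j 1 ∨ ∀ i : Fin k, j ≤ i → d i = 0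

/-!
A bounded sequence of holomorphic maps is one holomorphic map with values in the Banach algebra
`ℕ →ᵇ ℂ`. Taylor expanding that single map makes all estimates uniform, and turns the two sequences
`X_n`, `G_n` into two polynomial maps `u`, `g` over `ℕ →ᵇ ℂ` which have to satisfy
`g ∘ u = (σ u) ∘ f` up to order `d`, where `σ` is the shift of sequences.

If the coordinates get slightly decreasing weights, then the lower triangular linear part `A` of `f`
agrees with its diagonal up to terms of higher weight, so the defect can be removed along the weight
filtration one monomial at a time. Changing the coefficients of `z ^ m` in the `j`-th components of
`u` and `g` by `y` and `h` changes that of the defect by `A_jj y - σ(y) ∏ i, A_ii ^ m_i + h`. A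
monomial in the variables before the `j`-th one is left to `h`. Any other nonlinear monomial
contains a variable `z_l` with `j ≤ l`, so `|∏ i, A_ii ^ m_i| ≤ ξ |A_jj|` and `y` is found by
contraction.
-/

theorem exists_norm_le_ball_of_continuousOn {E F : Type*} [PseudoMetricSpace E]
    [SeminormedAddCommGroup F] {g : E → F} {U : Set E} (hU : IsOpen U)
    (hg : ContinuousOn g U) {c : E} (hc : c ∈ U) :
    ∃ r > 0, ball c r ⊆ U ∧ ∀ z ∈ ball c r, ‖g z‖ ≤ ‖g c‖ + 1 := by
  have hbound : ∀ᶠ z in 𝓝 c, ‖g z‖ < ‖g c‖ + 1 :=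
    (hg.continuousAt (hU.mem_nhds hc)).norm.eventually_lt_const (lt_add_one _)
  obtain ⟨r, hr, hball⟩ := Metric.eventually_nhds_iff_ball.1 (hbound.and (hU.mem_nhds hc))
  exact ⟨r, hr, fun z hz ↦ (hball z hz).2, fun z hz ↦ (hball z hz).1.le⟩

section Holomorphic

open BoundedContinuousFunction

variable {E F : Type*} [NormedAddCommGroup E] [NormedSpace ℂ E]
  [NormedAddCommGroup F] [NormedSpace ℂ F]

theorem hasFDerivAt_of_norm_sub_le_mul_sq {f : E → F} {L : E →L[ℂ] F} {c : E} {C : ℝ}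
    (h : ∀ᶠ z in 𝓝 c, ‖f z - f c - L (z - c)‖ ≤ C * ‖z - c‖ ^ 2) : HasFDerivAt f L c := by
  have hsq : (fun z ↦ f z - f c - L (z - c)) =O[𝓝 c] fun z ↦ ‖z - c‖ ^ 2 :=
    .of_bound C (by simpa using h)
  exact .of_isLittleO (hsq.trans_isLittleO (Asymptotics.isLittleO_pow_sub_sub c one_lt_two))

theorem norm_fderiv_le_of_norm_le_ball {f : E → F} {c : E} {r M : ℝ} (hr : 0 < r)
    (hf : DifferentiableOn ℂ f (ball c r)) (hM : ∀ z ∈ ball c r, ‖f z‖ ≤ M) :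
    ‖fderiv ℂ f c‖ ≤ 2 * M / r := by
  refine Complex.norm_fderiv_le_div_of_mapsTo_ball hf (fun z hz ↦ ?_) hr
  rw [mem_closedBall_iff_norm]
  linarith [norm_sub_le (f z) (f c), hM z hz, hM c (mem_ball_self hr)]

/-- The Schwarz lemma, applied to `f` minus its first-order part. -/
theorem norm_sub_sub_fderiv_le_of_norm_le_ball {f : E → F} {c z : E} {r M : ℝ}
    (hf : DifferentiableOn ℂ f (ball c r)) (hM : ∀ z ∈ ball c r, ‖f z‖ ≤ M)
    (hz : z ∈ ball c r) :
    ‖f z - f c - fderiv ℂ f c (z - c)‖ ≤ 4 * M * (‖z - c‖ / r) ^ 2 := by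
  have hr : 0 < r := nonempty_ball.1 ⟨z, hz⟩
  have hc : c ∈ ball c r := mem_ball_self hr
  have hf' := norm_fderiv_le_of_norm_le_ball hr hf hM
  set g : E → F := fun w ↦ f w - f c - fderiv ℂ f c (w - c)
  have hgc : g c = 0 := by simp [g]
  have hg : DifferentiableOn ℂ g (ball c r) := by fun_prop
  have hlin : ∀ w ∈ ball c r, ‖fderiv ℂ f c (w - c)‖ ≤ 2 * M := fun w hw ↦ calc
    _ ≤ 2 * M / r * r := (fderiv ℂ f c).le_of_opNorm_le_of_le hf' (mem_ball_iff_norm.1 hw).le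
    _ = 2 * M := div_mul_cancel₀ _ hr.ne'
  have hmaps : Set.MapsTo g (ball c r) (closedBall (g c) (4 * M)) := fun w hw ↦ by
    rw [hgc, mem_closedBall_zero_iff]
    linarith [norm_sub_le (f w - f c) (fderiv ℂ f c (w - c)), norm_sub_le (f w) (f c),
      hM w hw, hM c hc, hlin w hw]
  have hlittle : (g · - g c) =o[𝓝 c] fun w ↦ ‖w - c‖ ^ 1 := by
    simpa [hgc, g] using (hf.differentiableAt (ball_mem_nhds c hr)).hasFDerivAt.isLittleO.norm_right
  have hschwarz := Complex.dist_le_mul_div_pow_of_mapsTo_ball_of_isLittleO hg hmaps hlittle hz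
  rwa [hgc, dist_zero_right, dist_eq_norm] at hschwarz

theorem exists_tendsto_fderiv_of_tendstoUniformlyOn_ball [CompleteSpace F] {ι : Type*}
    {l : Filter ι} [l.NeBot] {f : ι → E → F} {g : E → F} {c : E} {r : ℝ} (hr : 0 < r)
    (hf : ∀ᶠ n in l, DifferentiableOn ℂ (f n) (ball c r))
    (hfg : TendstoUniformlyOn f g l (ball c r)) :
    ∃ L, Tendsto (fun n ↦ fderiv ℂ (f n) c) l (𝓝 L) := by
  refine CompleteSpace.complete (cauchy_map_iff'.2 ?_)
  refine Metric.uniformity_basis_dist.tendsto_right_iff.2 fun ε hε ↦ ?_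
  have hclose := hfg.uniformCauchySeqOn _ (dist_mem_uniformity (ε := ε * r / 4) (by positivity))
  filter_upwards [hclose, hf.prod_mk hf] with n hn hfn
  have hc := ball_mem_nhds c hr
  rw [dist_eq_norm, ← fderiv_sub (hfn.1.differentiableAt hc) (hfn.2.differentiableAt hc)]
  calc ‖fderiv ℂ (f n.1 - f n.2) c‖ ≤ 2 * (ε * r / 4) / r :=
        norm_fderiv_le_of_norm_le_ball hr (hfn.1.sub hfn.2) fun z hz ↦ by
          simpa [dist_eq_norm] using (hn z hz).le
    _ = ε / 2 := by field_simp; norm_num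
    _ < ε := half_lt_self hε

theorem differentiableAt_of_tendstoUniformlyOn_ball [CompleteSpace F] {ι : Type*}
    {l : Filter ι} [l.NeBot] {f : ι → E → F} {g : E → F} {c : E} {r : ℝ} (hr : 0 < r)
    (hf : ∀ᶠ n in l, DifferentiableOn ℂ (f n) (ball c r))
    (hfg : TendstoUniformlyOn f g l (ball c r)) : DifferentiableAt ℂ g c := by
  have hg : ContinuousOn g (ball c r) :=
    hfg.continuousOn (hf.mono fun n hn ↦ hn.continuousOn).frequently
  obtain ⟨s, hs, hsr, hgs⟩ :=
    exists_norm_le_ball_of_continuousOn isOpen_ball hg (mem_ball_self hr)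
  have hfs : ∀ᶠ n in l, ∀ z ∈ ball c s, ‖f n z‖ ≤ ‖g c‖ + 2 := by
    filter_upwards [Metric.tendstoUniformlyOn_iff.1 hfg 1 one_pos] with n hn z hz
    linarith [norm_sub_norm_le (f n z) (g z), hgs z hz, dist_eq_norm' (g z) (f n z) ▸ hn z (hsr hz)]
  obtain ⟨L, hL⟩ := exists_tendsto_fderiv_of_tendstoUniformlyOn_ball hr hf hfg
  refine (hasFDerivAt_of_norm_sub_le_mul_sq (L := L) (C := 4 * (‖g c‖ + 2) / s ^ 2) ?_)
    |>.differentiableAt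
  filter_upwards [ball_mem_nhds c hs] with z hz
  have hlim : Tendsto (fun n ↦ f n z - f n c - fderiv ℂ (f n) c (z - c)) l
      (𝓝 (g z - g c - L (z - c))) :=
    ((hfg.tendsto_at (hsr hz)).sub (hfg.tendsto_at (mem_ball_self hr))).sub
      (((ContinuousLinearMap.apply ℂ F (z - c)).continuous.tendsto L).comp hL)
  refine le_of_tendsto hlim.norm ?_
  filter_upwards [hf, hfs] with n hn hns
  exact (norm_sub_sub_fderiv_le_of_norm_le_ball (hn.mono hsr) hns hz).trans_eq (by ring)

theorem tendstoUniformlyOn_slope_ball {f : E → F} {c : E} {r M : ℝ} (hr : 0 < r)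
    (hf : DifferentiableOn ℂ f (ball c (r + r))) (hM : ∀ z ∈ ball c (r + r), ‖f z‖ ≤ M) (v : E) :
    TendstoUniformlyOn (fun (t : ℂ) z ↦ t⁻¹ • (f (z + t • v) - f z)) (fun z ↦ fderiv ℂ f z v)
      (𝓝[≠] 0) (ball c r) := by
  refine Metric.tendstoUniformlyOn_iff.2 fun ε hε ↦ ?_
  have hsmall : ∀ᶠ t : ℂ in 𝓝[≠] 0, ‖t • v‖ < r ∧ 4 * M * ‖v‖ ^ 2 / r ^ 2 * ‖t‖ < ε := by
    refine nhdsWithin_le_nhds (Filter.Eventually.and ?_ ?_)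
    · exact Continuous.tendsto' (by fun_prop) 0 _ (by simp) |>.eventually_lt_const hr
    · exact Continuous.tendsto' (by fun_prop) 0 0 (by simp) |>.eventually_lt_const hε
  filter_upwards [hsmall, self_mem_nhdsWithin] with t ⟨htr, htε⟩ ht0 z hz
  have hsub : ball z r ⊆ ball c (r + r) := ball_subset_ball' (by gcongr; exact (mem_ball.1 hz).le)
  have hrem := norm_sub_sub_fderiv_le_of_norm_le_ball (z := z + t • v) (hf.mono hsub)
    (fun w hw ↦ hM w (hsub hw)) (by simpa using htr)
  have ht : 0 < ‖t‖ := norm_pos_iff.2 ht0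
  rw [dist_eq_norm', ← inv_smul_smul₀ (ht0 : t ≠ 0) (fderiv ℂ f z v), ← smul_sub, norm_smul,
    norm_inv]
  rw [add_sub_cancel_left, map_smul, norm_smul] at hrem
  calc _ ≤ ‖t‖⁻¹ * (4 * M * (‖t‖ * ‖v‖ / r) ^ 2) := by gcongr
    _ = 4 * M * ‖v‖ ^ 2 / r ^ 2 * ‖t‖ := by field_simp
    _ < ε := htε

theorem differentiableOn_fderiv_apply [CompleteSpace F] {f : E → F} {U : Set E}
    (hU : IsOpen U) (hf : DifferentiableOn ℂ f U) (v : E) :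
    DifferentiableOn ℂ (fun z ↦ fderiv ℂ f z v) U := by
  intro c hc
  obtain ⟨s, hs, hsU, hM⟩ := exists_norm_le_ball_of_continuousOn hU hf.continuousOn hc
  set r := s / 2
  have hr : 0 < r := half_pos hs
  have hrs : r + r = s := add_halves s
  have hlim := tendstoUniformlyOn_slope_ball hr (hrs ▸ hf.mono hsU) (hrs ▸ hM) v
  refine (differentiableAt_of_tendstoUniformlyOn_ball hr ?_ hlim).differentiableWithinAt
  have hsmall : ∀ᶠ t : ℂ in 𝓝[≠] 0, ‖t • v‖ < r := nhdsWithin_le_nhds <|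
    Continuous.tendsto' (by fun_prop) 0 _ (by simp) |>.eventually_lt_const hr
  filter_upwards [hsmall] with t ht
  have hshift : Set.MapsTo (· + t • v) (ball c r) U := fun z hz ↦ hsU <| hrs ▸ by
    rw [mem_ball_iff_norm] at hz ⊢
    rw [add_sub_right_comm]
    exact (norm_add_le _ _).trans_lt (add_lt_add hz ht)
  exact ((hf.comp (by fun_prop) hshift).sub
    (hf.mono ((ball_subset_ball (by linarith)).trans hsU))).const_smul _

variable {ι : Type*} [TopologicalSpace ι] [DiscreteTopology ι] [Nonempty ι]

theorem exists_continuousLinearMap_boundedContinuousFunction {L : ι → E →L[ℂ] F} {C : ℝ}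
    (hL : ∀ i, ‖L i‖ ≤ C) : ∃ T : E →L[ℂ] ι →ᵇ F, ∀ v i, T v i = L i v := by
  have hbound : ∀ v i, ‖L i v‖ ≤ C * ‖v‖ := fun v i ↦ (L i).le_of_opNorm_le (hL i) v
  let T : E →ₗ[ℂ] ι →ᵇ F :=
    { toFun v := ofNormedAddCommGroupDiscrete (fun i ↦ L i v) (C * ‖v‖) (hbound v)
      map_add' v w := by ext i; simp
      map_smul' t v := by ext i; simp }
  exact ⟨T.mkContinuous C fun v ↦ norm_le_of_nonempty.2 (hbound v), fun v i ↦ rfl⟩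

theorem exists_differentiableOn_boundedContinuousFunction {f : ι → E → F} {c : E} {r M : ℝ}
    (hf : ∀ i, DifferentiableOn ℂ (f i) (ball c r)) (hM : ∀ i, ∀ z ∈ ball c r, ‖f i z‖ ≤ M) :
    ∃ Φ : E → ι →ᵇ F, DifferentiableOn ℂ Φ (ball c r) ∧ ∀ z ∈ ball c r, ∀ i, Φ z i = f i z := by
  classical
  let Φ : E → ι →ᵇ F := fun z ↦
    if hz : z ∈ ball c r then ofNormedAddCommGroupDiscrete (fun i ↦ f i z) M (hM · z hz) else 0
  have hΦ : ∀ z ∈ ball c r, ∀ i, Φ z i = f i z := fun z hz i ↦ by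
    simp only [Φ, dif_pos hz]; rfl
  refine ⟨Φ, fun w hw ↦ ?_, hΦ⟩
  obtain ⟨s, hs, hsr⟩ := Metric.isOpen_iff.1 isOpen_ball w hw
  obtain ⟨T, hT⟩ := exists_continuousLinearMap_boundedContinuousFunction fun i ↦
    norm_fderiv_le_of_norm_le_ball hs ((hf i).mono hsr) fun z hz ↦ hM i z (hsr hz)
  refine (hasFDerivAt_of_norm_sub_le_mul_sq (L := T) (C := 4 * M / s ^ 2) ?_).differentiableAt
    |>.differentiableWithinAt
  filter_upwards [ball_mem_nhds w hs] with z hz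
  refine norm_le_of_nonempty.2 fun i ↦ ?_
  rw [BoundedContinuousFunction.sub_apply, BoundedContinuousFunction.sub_apply, hT,
    hΦ z (hsr hz), hΦ w hw]
  exact (norm_sub_sub_fderiv_le_of_norm_le_ball ((hf i).mono hsr) (fun z hz ↦ hM i z (hsr hz))
    hz).trans_eq (by ring)

end Holomorphic

section Taylor

open MvPolynomial

variable {ι : Type*}

/-- The coordinates of a point of `ℂ^ι`, as elements of a `ℂ`-algebra `R`; polynomials with
coefficients in `R` are evaluated at complex points through it. -/
def scalarCoords (R : Type*) [CommRing R] [Algebra ℂ R] (z : EuclideanSpace ℂ ι) : ι → R :=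
  fun i ↦ algebraMap ℂ R (z i)

theorem eval_scalarCoords_smul_monomial {R : Type*} [CommRing R] [Algebra ℂ R] (t : ℂ)
    (z : EuclideanSpace ℂ ι) (m : ι →₀ ℕ) (c : R) :
    eval (scalarCoords R (t • z)) (monomial m c) =
      t ^ m.degree • eval (scalarCoords R z) (monomial m c) := by
  have hpow : (m.prod fun _ e ↦ algebraMap ℂ R t ^ e) = algebraMap ℂ R t ^ m.degree :=
    Finset.prod_pow_eq_pow_sum ..
  simp only [eval_monomial, scalarCoords, PiLp.smul_apply, smul_eq_mul, map_mul, mul_pow,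
    Finsupp.prod_mul, Algebra.smul_def, map_pow, hpow]
  ring

variable {R : Type*} [NormedCommRing R] [NormedAlgebra ℂ R]

/-- `s` divides the coefficients of `q` by their degree plus one. -/
theorem exists_hasDerivAt_eval_X_mul (i : ι) (q : MvPolynomial ι R) :
    ∃ s : MvPolynomial ι R, coeff 0 s = coeff 0 q ∧ ∀ (z : EuclideanSpace ℂ ι) (t : ℂ),
      HasDerivAt (fun u : ℂ ↦ eval (scalarCoords R (u • z)) (X i * s))
        (z i • eval (scalarCoords R (t • z)) q) t := by
  classical
  induction q using MvPolynomial.induction_on' with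
  | monomial m c =>
    refine ⟨monomial m ((m.degree + 1 : ℂ)⁻¹ • c), ?_, fun z t ↦ ?_⟩
    · rcases eq_or_ne m 0 with rfl | hm
      · simp
      · simp [coeff_monomial, hm]
    set v : R := z i • eval (scalarCoords R z) (monomial m c) with hv
    have hline (u : ℂ) : eval (scalarCoords R (u • z)) (X i * monomial m ((m.degree + 1 : ℂ)⁻¹ • c))
        = u ^ (m.degree + 1) • (m.degree + 1 : ℂ)⁻¹ • v := by
      rw [map_mul, eval_X, eval_scalarCoords_smul_monomial, hv]
      simp only [eval_monomial, scalarCoords, PiLp.smul_apply, smul_eq_mul, map_mul,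
        Algebra.smul_def, map_pow]
      ring
    simp only [hline]
    refine ((hasDerivAt_pow (m.degree + 1) t).smul_const _).congr_deriv ?_
    have hdeg : (m.degree + 1 : ℂ) ≠ 0 := Nat.cast_add_one_ne_zero m.degree
    rw [eval_scalarCoords_smul_monomial, smul_comm (z i), smul_smul]
    congr 1
    rw [add_tsub_cancel_right]
    push_cast
    field_simp
  | add p q hp hq =>
    obtain ⟨s, hs0, hs⟩ := hp
    obtain ⟨s', hs0', hs'⟩ := hq
    refine ⟨s + s', by simp [hs0, hs0'], fun z t ↦ ?_⟩
    simpa only [mul_add, map_add, smul_add] using (hs z t).fun_add (hs' z t)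

variable [Fintype ι]

theorem isBigO_sub_of_hasDerivAt_comp_smul {F : Type*} [NormedAddCommGroup F] [NormedSpace ℂ F]
    {g : EuclideanSpace ℂ ι → F} {g' : ι → EuclideanSpace ℂ ι → F} {n : ℕ}
    (hg : ∀ᶠ z in 𝓝 0, ∀ t ∈ closedBall (0 : ℂ) 1,
      HasDerivAt (fun u : ℂ ↦ g (u • z)) (∑ i, z i • g' i (t • z)) t)
    (hg' : ∀ i, g' i =O[𝓝 0] fun z ↦ ‖z‖ ^ n) :
    (fun z ↦ g z - g 0) =O[𝓝 0] fun z ↦ ‖z‖ ^ (n + 1) := by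
  choose C hC0 hC using fun i ↦ (hg' i).exists_nonneg
  obtain ⟨r, hr, hball⟩ := Metric.eventually_nhds_iff_ball.1
    (hg.and (eventually_all.2 fun i ↦ (hC i).bound))
  refine .of_bound (∑ i, C i) ?_
  filter_upwards [ball_mem_nhds 0 hr] with z hz
  have hderiv : ∀ t ∈ closedBall (0 : ℂ) 1,
      ‖∑ i, z i • g' i (t • z)‖ ≤ (∑ i, C i) * ‖z‖ ^ (n + 1) := fun t ht ↦ by
    have htz : ‖t • z‖ ≤ ‖z‖ := by
      rw [norm_smul]; exact mul_le_of_le_one_left (norm_nonneg z) (by simpa using ht)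
    rw [Finset.sum_mul]
    refine norm_sum_le_of_le _ fun i _ ↦ ?_
    have hi := (hball (t • z) (balanced_ball_zero.smul_mem (by simpa using ht) hz)).2 i
    rw [norm_pow, norm_norm] at hi
    calc ‖z i • g' i (t • z)‖ ≤ ‖z‖ * (C i * ‖z‖ ^ n) := by
          rw [norm_smul]
          gcongr
          · exact PiLp.norm_apply_le z i
          · exact hi.trans (by have := hC0 i; gcongr)
      _ = C i * ‖z‖ ^ (n + 1) := by ring
  have hmvt := (convex_closedBall (0 : ℂ) 1).norm_image_sub_le_of_norm_hasDerivWithin_le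
    (fun t ht ↦ ((hball z hz).1 t ht).hasDerivWithinAt) hderiv (x := 0) (y := 1) (by simp) (by simp)
  simpa using hmvt

theorem continuousLinearMap_apply_eq_sum_smul_single [DecidableEq ι] {F : Type*}
    [NormedAddCommGroup F] [NormedSpace ℂ F] (L : EuclideanSpace ℂ ι →L[ℂ] F)
    (z : EuclideanSpace ℂ ι) :
    L z = ∑ i, z i • L (EuclideanSpace.single i 1) := by
  conv_lhs => rw [← (EuclideanSpace.basisFun ι ℂ).sum_repr z]
  simp

theorem hasDerivAt_comp_smul [DecidableEq ι] {F : Type*} [NormedAddCommGroup F]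
    [NormedSpace ℂ F] {f : EuclideanSpace ℂ ι → F} {z : EuclideanSpace ℂ ι} {t : ℂ}
    (hf : DifferentiableAt ℂ f (t • z)) :
    HasDerivAt (fun u : ℂ ↦ f (u • z))
      (∑ i, z i • fderiv ℂ f (t • z) (EuclideanSpace.single i 1)) t := by
  rw [← continuousLinearMap_apply_eq_sum_smul_single]
  refine hf.hasFDerivAt.comp_hasDerivAt t ?_
  simpa using (hasDerivAt_id t).smul_const z

theorem exists_isBigO_sub_eval_succ [DecidableEq ι] {f : EuclideanSpace ℂ ι → R} {n : ℕ}
    (hf : ∀ᶠ z in 𝓝 0, DifferentiableAt ℂ f z) {q : ι → MvPolynomial ι R}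
    (hq : ∀ i, (fun z ↦ fderiv ℂ f z (EuclideanSpace.single i 1) - eval (scalarCoords R z) (q i))
      =O[𝓝 0] fun z ↦ ‖z‖ ^ n) :
    ∃ p : MvPolynomial ι R, coeff 0 p = f 0 ∧
      (∀ i, coeff (Finsupp.single i 1) p = coeff 0 (q i)) ∧
      (fun z ↦ f z - eval (scalarCoords R z) p) =O[𝓝 0] fun z ↦ ‖z‖ ^ (n + 1) := by
  choose s hs0 hs using fun i ↦ exists_hasDerivAt_eval_X_mul i (q i)
  have hcoeff (i j) : coeff (Finsupp.single i 1) (X j * s j) =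
      if i = j then coeff 0 (q j) else 0 := by
    rw [coeff_X_mul']
    by_cases hij : i = j
    · subst hij; simp [hs0]
    · simp [hij, Ne.symm hij]
  refine ⟨C (f 0) + ∑ i, X i * s i, by simp [coeff_sum, coeff_X_mul'],
    fun i ↦ by simp [coeff_sum, hcoeff, coeff_C, eq_comm], ?_⟩
  have hzero : eval (scalarCoords R (0 : EuclideanSpace ℂ ι)) (∑ i, X i * s i) = 0 := by
    simp [scalarCoords]
  refine (isBigO_sub_of_hasDerivAt_comp_smul
    (g := fun z ↦ f z - eval (scalarCoords R z) (∑ i, X i * s i)) ?_ hq).congr_left fun z ↦ ?_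
  · obtain ⟨r, hr, hball⟩ := Metric.eventually_nhds_iff_ball.1 hf
    filter_upwards [ball_mem_nhds 0 hr] with z hz t ht
    have htz : t • z ∈ ball 0 r :=
      balanced_ball_zero.smul_mem (by simpa using ht) hz
    simp only [smul_sub, Finset.sum_sub_distrib, map_sum]
    exact (hasDerivAt_comp_smul (hball _ htz)).fun_sub (HasDerivAt.fun_sum fun i _ ↦ hs i z t)
  · simp only [hzero, map_add, eval_C]
    ring

theorem exists_isBigO_sub_eval [CompleteSpace R] {f : EuclideanSpace ℂ ι → R}
    {U : Set (EuclideanSpace ℂ ι)} (hU : IsOpen U) (h0 : 0 ∈ U)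
    (hf : DifferentiableOn ℂ f U) (n : ℕ) :
    ∃ p : MvPolynomial ι R, coeff 0 p = f 0 ∧
      (fun z ↦ f z - eval (scalarCoords R z) p) =O[𝓝 0] fun z ↦ ‖z‖ ^ (n + 1) := by
  classical
  induction n generalizing f with
  | zero =>
    refine ⟨C (f 0), coeff_zero_C _, ?_⟩
    simpa using (hf.differentiableAt (hU.mem_nhds h0)).isBigO_sub.norm_right
  | succ n ih =>
    choose q _ hq using fun i ↦ ih (differentiableOn_fderiv_apply hU hf (EuclideanSpace.single i 1))
    obtain ⟨p, hp0, -, hp⟩ := exists_isBigO_sub_eval_succ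
      ((hU.eventually_mem h0).mono fun z hz ↦ hf.differentiableAt (hU.mem_nhds hz)) hq
    exact ⟨p, hp0, hp⟩

theorem exists_taylor_polynomial [DecidableEq ι] [CompleteSpace R] {f : EuclideanSpace ℂ ι → R}
    {U : Set (EuclideanSpace ℂ ι)} (hU : IsOpen U) (h0 : 0 ∈ U)
    (hf : DifferentiableOn ℂ f U) {n : ℕ} (hn : 1 ≤ n) :
    ∃ p : MvPolynomial ι R, coeff 0 p = f 0 ∧
      (∀ i, coeff (Finsupp.single i 1) p = fderiv ℂ f 0 (EuclideanSpace.single i 1)) ∧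
      (fun z ↦ f z - eval (scalarCoords R z) p) =O[𝓝 0] fun z ↦ ‖z‖ ^ (n + 1) := by
  obtain ⟨n, rfl⟩ := Nat.exists_eq_add_of_le' hn
  choose q hq0 hq using fun i ↦ exists_isBigO_sub_eval hU h0
    (differentiableOn_fderiv_apply hU hf (EuclideanSpace.single i 1)) n
  simpa only [hq0] using exists_isBigO_sub_eval_succ
    ((hU.eventually_mem h0).mono fun z hz ↦ hf.differentiableAt (hU.mem_nhds hz)) hq

end Taylor

section WeightFiltration

open MvPolynomial
open scoped Pointwise

variable {ι R : Type*} [CommRing R]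

theorem bind₁_mem_of_mem_idealOfVars {I : Ideal (MvPolynomial ι R)}
    {u : ι → MvPolynomial ι R} (hu : ∀ i, u i ∈ I) {p : MvPolynomial ι R}
    (hp : p ∈ idealOfVars ι R) : bind₁ u p ∈ I := by
  have hle : idealOfVars ι R ≤ I.comap (bind₁ u) := by
    rw [Ideal.span_le]
    rintro _ ⟨i, rfl⟩
    simpa using hu i
  exact hle hp

theorem bind₁_sub_bind₁_mem {I : Ideal (MvPolynomial ι R)} {u v : ι → MvPolynomial ι R}
    (huv : ∀ i, u i - v i ∈ I) (p : MvPolynomial ι R) : bind₁ u p - bind₁ v p ∈ I := by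
  have heq : (Ideal.Quotient.mkₐ R I).comp (bind₁ u) = (Ideal.Quotient.mkₐ R I).comp (bind₁ v) := by
    ext i
    simpa using Ideal.Quotient.eq.2 (huv i)
  exact Ideal.Quotient.eq.1 (DFunLike.congr_fun heq p)

theorem bind₁_sub_bind₁_mem_mul {I J : Ideal (MvPolynomial ι R)} {u v : ι → MvPolynomial ι R}
    (hu : ∀ i, u i ∈ I) (hv : ∀ i, v i ∈ I) (huv : ∀ i, u i - v i ∈ J)
    {p : MvPolynomial ι R} (hp : p ∈ idealOfVars ι R ^ 2) :
    bind₁ u p - bind₁ v p ∈ I * J := by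
  rw [pow_two] at hp
  induction hp using Submodule.mul_induction_on' with
  | mem_mul_mem q hq r hr =>
    have hsplit : bind₁ u (q * r) - bind₁ v (q * r) =
        bind₁ u q * (bind₁ u r - bind₁ v r) + bind₁ v r * (bind₁ u q - bind₁ v q) := by
      simp only [map_mul]
      ring
    rw [hsplit]
    exact add_mem
      (Ideal.mul_mem_mul (bind₁_mem_of_mem_idealOfVars hu hq) (bind₁_sub_bind₁_mem huv r))
      (Ideal.mul_mem_mul (bind₁_mem_of_mem_idealOfVars hv hr) (bind₁_sub_bind₁_mem huv q))
  | add q _ r _ ihq ihr =>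
    simpa only [map_add, add_sub_add_comm] using add_mem ihq ihr

theorem mem_restrictSupport_iff_coeff {s : Set (ι →₀ ℕ)} {p : MvPolynomial ι R} :
    p ∈ restrictSupport R s ↔ ∀ m, coeff m p ≠ 0 → m ∈ s := by
  simp only [mem_restrictSupport_iff, Set.subset_def, Finset.mem_coe, mem_support_iff]

/-- The polynomials all of whose monomials have weight at least `N` when the variable `X i` has
weight `w i`. These ideals form the filtration along which the conjugacy is corrected. -/
def weightIdeal (R : Type*) [CommRing R] (w : ι → ℕ) (N : ℕ) : Ideal (MvPolynomial ι R) :=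
  restrictSupportIdeal R {m | N ≤ Finsupp.weight w m} fun m m' hle (hm : N ≤ _) ↦ by
    obtain ⟨c, rfl⟩ := exists_add_of_le hle
    exact hm.trans (by simp)

variable {w : ι → ℕ} {N M : ℕ}

theorem mem_weightIdeal_iff {p : MvPolynomial ι R} :
    p ∈ weightIdeal R w N ↔ ∀ m, Finsupp.weight w m < N → coeff m p = 0 := by
  refine mem_restrictSupport_iff_coeff.trans (forall_congr' fun m ↦ ?_)
  rw [Set.mem_ofPred_eq, ← not_lt, not_imp_not]

theorem monomial_mem_weightIdeal {m : ι →₀ ℕ} (hm : N ≤ Finsupp.weight w m) (c : R) :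
    monomial m c ∈ weightIdeal R w N :=
  (monomial_mem_restrictSupport R).2 (Or.inl hm)

theorem X_mem_weightIdeal (i : ι) : X i ∈ weightIdeal R w (w i) :=
  monomial_mem_weightIdeal (by simp [Finsupp.weight_single]) 1

theorem weightIdeal_antitone : Antitone (weightIdeal R w) := fun _ _ hNM ↦
  restrictSupport_mono _ fun _ ↦ le_trans hNM

theorem mul_mem_weightIdeal {p q : MvPolynomial ι R} (hp : p ∈ weightIdeal R w N)
    (hq : q ∈ weightIdeal R w M) : p * q ∈ weightIdeal R w (N + M) := by
  have hmul : p * q ∈ restrictSupport R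
      ({m : ι →₀ ℕ | N ≤ Finsupp.weight w m} + {m | M ≤ Finsupp.weight w m}) := by
    rw [restrictSupport_add]
    exact Submodule.mul_mem_mul hp hq
  refine restrictSupport_mono _ ?_ hmul
  rintro _ ⟨m, hm, m', hm', rfl⟩
  simpa only [Set.mem_ofPred_eq, map_add] using add_le_add hm hm'

theorem idealOfVars_pow_le_weightIdeal {c : ℕ} (hc : ∀ i, c ≤ w i) (n : ℕ) :
    idealOfVars ι R ^ n ≤ weightIdeal R w (n * c) := by
  induction n with
  | zero => exact fun p _ ↦ mem_weightIdeal_iff.2 (by simp)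
  | succ n ih =>
    have hvars : idealOfVars ι R ≤ weightIdeal R w c := by
      rw [Ideal.span_le]
      rintro _ ⟨i, rfl⟩
      exact weightIdeal_antitone (hc i) (X_mem_weightIdeal i)
    rw [pow_succ, Nat.succ_mul, Ideal.mul_le]
    exact fun p hp q hq ↦ mul_mem_weightIdeal (ih hp) (hvars hq)

theorem map_mem_weightIdeal (σ : R →+* R) {p : MvPolynomial ι R} (hp : p ∈ weightIdeal R w N) :
    map σ p ∈ weightIdeal R w N := by
  rw [mem_weightIdeal_iff] at hp ⊢
  intro m hm
  rw [coeff_map, hp m hm, map_zero]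

theorem mul_sub_mul_mem_weightIdeal {p p' q q' : MvPolynomial ι R} (hp : p ∈ weightIdeal R w N)
    (hq : q ∈ weightIdeal R w M) (hp' : p' - p ∈ weightIdeal R w (N + 1))
    (hq' : q' - q ∈ weightIdeal R w (M + 1)) :
    p' * q' - p * q ∈ weightIdeal R w (N + M + 1) := by
  have hsplit : p' * q' - p * q = (p' - p) * (q' - q) + (p' - p) * q + p * (q' - q) := by ring
  rw [hsplit]
  refine add_mem (add_mem ?_ ?_) ?_
  · exact weightIdeal_antitone (by omega) (mul_mem_weightIdeal hp' hq')
  · exact weightIdeal_antitone (by omega) (mul_mem_weightIdeal hp' hq)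
  · exact weightIdeal_antitone (by omega) (mul_mem_weightIdeal hp hq')

theorem bind₁_monomial_sub_bind₁_monomial_mem_weightIdeal {u v : ι → MvPolynomial ι R}
    (hv : ∀ i, v i ∈ weightIdeal R w (w i)) (huv : ∀ i, u i - v i ∈ weightIdeal R w (w i + 1))
    (m : ι →₀ ℕ) :
    bind₁ v (monomial m 1) ∈ weightIdeal R w (Finsupp.weight w m) ∧
      bind₁ u (monomial m 1) - bind₁ v (monomial m 1) ∈
        weightIdeal R w (Finsupp.weight w m + 1) := by
  have hzero : bind₁ v (monomial (0 : ι →₀ ℕ) 1) ∈ weightIdeal R w (Finsupp.weight w (0 : ι →₀ ℕ)) ∧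
      bind₁ u (monomial (0 : ι →₀ ℕ) 1) - bind₁ v (monomial 0 1) ∈
        weightIdeal R w (Finsupp.weight w (0 : ι →₀ ℕ) + 1) := by
    simp [mem_weightIdeal_iff]
  have hadd (m m' : ι →₀ ℕ) : monomial (m + m') (1 : R) = monomial m 1 * monomial m' 1 := by
    rw [monomial_mul, one_mul]
  induction m using Finsupp.induction_linear with
  | zero => exact hzero
  | add m m' ih ih' =>
    rw [hadd, map_add, map_mul, map_mul]
    exact ⟨mul_mem_weightIdeal ih.1 ih'.1, mul_sub_mul_mem_weightIdeal ih.1 ih'.1 ih.2 ih'.2⟩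
  | single i e =>
    induction e with
    | zero => simpa only [Finsupp.single_zero] using hzero
    | succ e ih =>
      have hone : Finsupp.weight w (Finsupp.single i 1) = w i := by simp [Finsupp.weight_single]
      rw [Finsupp.single_add, hadd, map_add, map_mul, map_mul, hone, ← X, bind₁_X_right,
        bind₁_X_right]
      exact ⟨mul_mem_weightIdeal ih.1 (hv i), mul_sub_mul_mem_weightIdeal ih.1 (hv i) ih.2 (huv i)⟩

theorem bind₁_sub_bind₁_mem_weightIdeal {u v : ι → MvPolynomial ι R}
    (hv : ∀ i, v i ∈ weightIdeal R w (w i)) (huv : ∀ i, u i - v i ∈ weightIdeal R w (w i + 1))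
    {p : MvPolynomial ι R} (hp : p ∈ weightIdeal R w N) :
    bind₁ u p - bind₁ v p ∈ weightIdeal R w (N + 1) := by
  rw [p.as_sum, map_sum, map_sum, ← Finset.sum_sub_distrib]
  refine sum_mem fun m hm ↦ ?_
  have hNm : N ≤ Finsupp.weight w m := hp hm
  have hdiff := (bind₁_monomial_sub_bind₁_monomial_mem_weightIdeal hv huv m).2
  rw [← mul_one (coeff m p), ← C_mul_monomial, map_mul, map_mul, bind₁_C_right, bind₁_C_right,
    ← mul_sub]
  exact Ideal.mul_mem_left _ _ (weightIdeal_antitone (by omega) hdiff)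

theorem coeff_bind₁_C_mul_X (c : ι → R) (p : MvPolynomial ι R) (m : ι →₀ ℕ) :
    coeff m (bind₁ (fun i ↦ C (c i) * X i) p) = coeff m p * m.prod fun i e ↦ c i ^ e := by
  classical
  induction p using MvPolynomial.induction_on' with
  | monomial m' a =>
    have hmon : bind₁ (fun i ↦ C (c i) * X i) (monomial m' a) =
        monomial m' (a * m'.prod fun i e ↦ c i ^ e) := by
      rw [bind₁_monomial, monomial_eq, C_mul, mul_assoc]
      simp only [mul_pow, Finset.prod_mul_distrib, Finsupp.prod, map_prod, map_pow]
    rw [hmon, coeff_monomial, coeff_monomial]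
    split_ifs with h
    · rw [h]
    · rw [zero_mul]
  | add p q hp hq => rw [map_add, coeff_add, coeff_add, hp, hq, add_mul]

end WeightFiltration

section ConjugacyError

open MvPolynomial

variable {k N : ℕ} {R : Type*} [CommRing R]

/-- The weights for which a lower triangular linear map is a perturbation of its diagonal: they
decrease along the coordinates, while still any two of them add up to more than any third. -/
def triangularWeight (k : ℕ) (i : Fin k) : ℕ := 3 * k - i

theorem weight_triangularWeight_le (m : Fin k →₀ ℕ) :
    Finsupp.weight (triangularWeight k) m ≤ 3 * k * m.degree := by
  rw [Finsupp.weight_apply, Finsupp.degree_apply, Finsupp.sum, Finset.mul_sum]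
  refine Finset.sum_le_sum fun i _ ↦ ?_
  rw [smul_eq_mul, mul_comm]
  gcongr
  exact Nat.sub_le _ _

theorem idealOfVars_sq_le_weightIdeal_triangularWeight :
    idealOfVars (Fin k) R ^ 2 ≤ weightIdeal R (triangularWeight k) (2 * (2 * k + 1)) :=
  idealOfVars_pow_le_weightIdeal (fun i ↦ by unfold triangularWeight; omega) 2

theorem mem_weightIdeal_triangularWeight_of_sub_X_mem {p : MvPolynomial (Fin k) R} {j : Fin k}
    (hp : p - X j ∈ idealOfVars (Fin k) R ^ 2) :
    p ∈ weightIdeal R (triangularWeight k) (2 * k + 1) := by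
  have hX : X j ∈ weightIdeal R (triangularWeight k) (2 * k + 1) :=
    weightIdeal_antitone (by unfold triangularWeight; omega) (X_mem_weightIdeal j)
  have hsub : p - X j ∈ weightIdeal R (triangularWeight k) (2 * k + 1) :=
    weightIdeal_antitone (by omega) (idealOfVars_sq_le_weightIdeal_triangularWeight hp)
  simpa only [sub_add_cancel] using add_mem hsub hX

theorem sub_C_mul_X_mem_weightIdeal {A : Matrix (Fin k) (Fin k) R} {p : MvPolynomial (Fin k) R}
    {j : Fin k} (hA : ∀ i, j < i → A j i = 0)
    (hp : p - A.toMvPolynomial j ∈ idealOfVars (Fin k) R ^ 2) :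
    p - C (A j j) * X j ∈ weightIdeal R (triangularWeight k) (triangularWeight k j + 1) := by
  have hlin : A.toMvPolynomial j - C (A j j) * X j ∈
      weightIdeal R (triangularWeight k) (triangularWeight k j + 1) := by
    rw [Matrix.toMvPolynomial, C_mul_X_eq_monomial,
      ← Finset.add_sum_erase _ _ (Finset.mem_univ j), add_sub_cancel_left]
    refine sum_mem fun i hi ↦ ?_
    rcases lt_or_gt_of_ne (Finset.ne_of_mem_erase hi) with hij | hij
    · refine monomial_mem_weightIdeal ?_ _
      rw [Finsupp.weight_single, one_smul]
      unfold triangularWeight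
      omega
    · simp [hA i hij]
  have hsub : p - A.toMvPolynomial j ∈
      weightIdeal R (triangularWeight k) (triangularWeight k j + 1) := weightIdeal_antitone
    (by unfold triangularWeight; omega) (idealOfVars_sq_le_weightIdeal_triangularWeight hp)
  simpa only [sub_add_sub_cancel] using add_mem hsub hlin

/-- The defect of the tuple `u` as a conjugacy from `f` to `g`, where the ring endomorphism `σ` of
the coefficients advances the index of a nonautonomous system: `g ∘ u - (σ u) ∘ f`. -/
def conjugacyError (σ : R →+* R) (f u g : Fin k → MvPolynomial (Fin k) R) (j : Fin k) :
    MvPolynomial (Fin k) R :=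
  bind₁ u (g j) - bind₁ f (map σ (u j))

variable {A : Matrix (Fin k) (Fin k) R} {σ : R →+* R} {f u g y h : Fin k → MvPolynomial (Fin k) R}

theorem bind₁_add_sub_bind₁_mem_weightIdeal (hA : ∀ i j, i < j → A i j = 0)
    (hg : ∀ j, g j - A.toMvPolynomial j ∈ idealOfVars (Fin k) R ^ 2)
    (hu : ∀ j, u j - X j ∈ idealOfVars (Fin k) R ^ 2)
    (huy : ∀ j, (u + y) j - X j ∈ idealOfVars (Fin k) R ^ 2)
    (hy : ∀ j : Fin k, y j ∈ weightIdeal R (triangularWeight k) (N - j)) (j : Fin k) :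
    bind₁ (u + y) (g j) - bind₁ u (g j) - C (A j j) * y j ∈
      weightIdeal R (triangularWeight k) (N + 1 - j) := by
  have hlin : bind₁ (u + y) (A.toMvPolynomial j) - bind₁ u (A.toMvPolynomial j) -
      C (A j j) * y j ∈ weightIdeal R (triangularWeight k) (N + 1 - j) := by
    have hsum : bind₁ (u + y) (A.toMvPolynomial j) - bind₁ u (A.toMvPolynomial j) -
        C (A j j) * y j = ∑ i ∈ Finset.univ.erase j, C (A j i) * y i := by
      simp only [Matrix.toMvPolynomial, ← C_mul_X_eq_monomial, map_sum, map_mul, bind₁_C_right,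
        bind₁_X_right, ← Finset.sum_sub_distrib, ← mul_sub, Pi.add_apply, add_sub_cancel_left]
      rw [← Finset.add_sum_erase _ _ (Finset.mem_univ j), add_sub_cancel_left]
    rw [hsum]
    refine sum_mem fun i hi ↦ ?_
    rcases lt_or_gt_of_ne (Finset.ne_of_mem_erase hi) with hij | hij
    · exact Ideal.mul_mem_left _ _ (weightIdeal_antitone (by omega) (hy i))
    · simp [hA j i hij]
  have hrem := bind₁_sub_bind₁_mem_mul
    (fun i ↦ mem_weightIdeal_triangularWeight_of_sub_X_mem (huy i))
    (fun i ↦ mem_weightIdeal_triangularWeight_of_sub_X_mem (hu i))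
    (J := weightIdeal R (triangularWeight k) (N - k))
    (fun i ↦ by simpa using weightIdeal_antitone (by omega) (hy i)) (hg j)
  have hmul : weightIdeal R (triangularWeight k) (2 * k + 1) *
      weightIdeal R (triangularWeight k) (N - k) ≤
      weightIdeal R (triangularWeight k) (N + 1 - j) := Ideal.mul_le.2
    fun p hp q hq ↦ weightIdeal_antitone (by omega) (mul_mem_weightIdeal hp hq)
  convert add_mem (hmul hrem) hlin using 1
  simp only [map_sub]
  ring

theorem conjugacyError_add_sub_mem_weightIdeal (hA : ∀ i j, i < j → A i j = 0)
    (hf : ∀ j, f j - A.toMvPolynomial j ∈ idealOfVars (Fin k) R ^ 2)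
    (hg : ∀ j, g j - A.toMvPolynomial j ∈ idealOfVars (Fin k) R ^ 2)
    (hu : ∀ j, u j - X j ∈ idealOfVars (Fin k) R ^ 2)
    (huy : ∀ j, (u + y) j - X j ∈ idealOfVars (Fin k) R ^ 2)
    (hy : ∀ j : Fin k, y j ∈ weightIdeal R (triangularWeight k) (N - j))
    (hh : ∀ j : Fin k, h j ∈ weightIdeal R (triangularWeight k) (N - j)) (hN : k ≤ N) (j : Fin k) :
    conjugacyError σ f (u + y) (g + h) j - conjugacyError σ f u g j -
        (C (A j j) * y j - bind₁ (fun i ↦ C (A i i) * X i) (map σ (y j)) + h j) ∈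
      weightIdeal R (triangularWeight k) (N + 1 - j) := by
  have hweight : N + 1 - j = N - j + 1 := by omega
  have hsub := bind₁_add_sub_bind₁_mem_weightIdeal hA hg hu huy hy j
  have hbind_h : bind₁ (u + y) (h j) - h j ∈ weightIdeal R (triangularWeight k) (N + 1 - j) := by
    have hlead (i : Fin k) : (u + y) i - X i ∈
        weightIdeal R (triangularWeight k) (triangularWeight k i + 1) :=
      weightIdeal_antitone (by unfold triangularWeight; omega)
        (idealOfVars_sq_le_weightIdeal_triangularWeight (huy i))
    have := bind₁_sub_bind₁_mem_weightIdeal X_mem_weightIdeal hlead (hh j)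
    rwa [bind₁_X_left, AlgHom.id_apply, ← hweight] at this
  have hbind_f : bind₁ f (map σ (y j)) - bind₁ (fun i ↦ C (A i i) * X i) (map σ (y j)) ∈
      weightIdeal R (triangularWeight k) (N + 1 - j) := by
    rw [hweight]
    exact bind₁_sub_bind₁_mem_weightIdeal (fun i ↦ Ideal.mul_mem_left _ _ (X_mem_weightIdeal i))
      (fun i ↦ sub_C_mul_X_mem_weightIdeal (hA i) (hf i)) (map_mem_weightIdeal σ (hy j))
  convert sub_mem (add_mem hsub hbind_h) hbind_f using 1
  simp only [conjugacyError, Pi.add_apply, map_add]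
  ring

theorem exists_coeff_eq_ite {ι : Type*} (S : Set (ι →₀ ℕ)) [DecidablePred (· ∈ S)] (hS : S.Finite)
    (c : (ι →₀ ℕ) → R) :
    ∃ p : MvPolynomial ι R, ∀ m, coeff m p = if m ∈ S then c m else 0 := by
  classical
  refine ⟨∑ m ∈ hS.toFinset, monomial m (c m), fun m ↦ ?_⟩
  simp [coeff_sum, coeff_monomial]

/-- The exponents of the monomials that a correction of degree at most `d` may use. -/
def nonlinearExponents (k d : ℕ) : Set (Fin k →₀ ℕ) := {m | 2 ≤ m.degree ∧ m.degree ≤ d}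

/-- The nonlinear exponents that may occur in the `j`-th component of a lower triangular map. -/
def lowerTriangularExponents (k d : ℕ) (j : Fin k) : Set (Fin k →₀ ℕ) :=
  {m ∈ nonlinearExponents k d | ∀ i, j ≤ i → m i = 0}

theorem mem_idealOfVars_sq_of_mem_restrictSupport {d : ℕ} {p : MvPolynomial (Fin k) R}
    (hp : p ∈ restrictSupport R (nonlinearExponents k d)) : p ∈ idealOfVars (Fin k) R ^ 2 :=
  (mem_pow_idealOfVars_iff 2 p).2 fun _ hm ↦ (hp hm).1

theorem mem_restrictSupport_nonlinearExponents {d : ℕ} {j : Fin k} {p : MvPolynomial (Fin k) R}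
    (hp : p ∈ restrictSupport R (lowerTriangularExponents k d j)) :
    p ∈ restrictSupport R (nonlinearExponents k d) :=
  restrictSupport_mono R (Set.sep_subset _ _) hp

/-- The homological equation is solvable for every monomial that a lower triangular map may not
contain: given a right-hand side, the correction `y` of a coefficient of the conjugacy exists. -/
def HomologicallySolvable (σ : R →+* R) (A : Matrix (Fin k) (Fin k) R) : Prop :=
  ∀ (j : Fin k) (m : Fin k →₀ ℕ), 2 ≤ m.degree → (∃ l, j ≤ l ∧ m l ≠ 0) →
    ∀ e, ∃ y, A j j * y - σ y * (m.prod fun i n ↦ A i i ^ n) = e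

theorem HomologicallySolvable.exists_correction (hs : HomologicallySolvable σ A) (j : Fin k)
    (m : Fin k →₀ ℕ) (hm : 2 ≤ m.degree) (e : R) :
    ∃ y h, A j j * y - σ y * (m.prod fun i n ↦ A i i ^ n) + h = e ∧
      (h ≠ 0 → ∀ i, j ≤ i → m i = 0) := by
  by_cases hlow : ∀ i, j ≤ i → m i = 0
  · exact ⟨0, e, by simp, fun _ ↦ hlow⟩
  · push Not at hlow
    obtain ⟨y, hy⟩ := hs j m hm hlow e
    exact ⟨y, 0, by simpa using hy, by simp⟩

theorem two_le_degree_of_weight_triangularWeight {j : Fin k} {m : Fin k →₀ ℕ} (hN : 4 * k ≤ N)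
    (hm : Finsupp.weight (triangularWeight k) m + j = N) : 2 ≤ m.degree := by
  by_contra! hlt
  have hle := weight_triangularWeight_le m
  have : 3 * k * m.degree ≤ 3 * k * 1 := by gcongr; omega
  omega

theorem HomologicallySolvable.exists_level_correction (hs : HomologicallySolvable σ A) (d : ℕ)
    (hN : 4 * k ≤ N) (e : Fin k → MvPolynomial (Fin k) R) :
    ∃ y h : Fin k → MvPolynomial (Fin k) R,
      (∀ j, y j ∈ restrictSupport R (nonlinearExponents k d)) ∧
      (∀ j, h j ∈ restrictSupport R (lowerTriangularExponents k d j)) ∧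
      (∀ j : Fin k, y j ∈ weightIdeal R (triangularWeight k) (N - j)) ∧
      (∀ j : Fin k, h j ∈ weightIdeal R (triangularWeight k) (N - j)) ∧
      ∀ (j : Fin k) m, m.degree ≤ d →
        coeff m (C (A j j) * y j - bind₁ (fun i ↦ C (A i i) * X i) (map σ (y j)) + h j) =
          if Finsupp.weight (triangularWeight k) m + j = N then coeff m (e j) else 0 := by
  classical
  choose! c b hcb hb using fun j m hm ↦ hs.exists_correction j m hm (coeff m (e j))
  let S (j : Fin k) : Set (Fin k →₀ ℕ) :=
    {m | m.degree ≤ d ∧ Finsupp.weight (triangularWeight k) m + j = N}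
  have hS (j : Fin k) : (S j).Finite := (Finsupp.finite_of_degree_le d).subset fun _ hm ↦ hm.1
  choose y hy using fun j ↦ exists_coeff_eq_ite (S j) (hS j) (c j)
  choose h hh using fun j ↦ exists_coeff_eq_ite (S j) (hS j) (b j)
  have hdeg {j m} (hm : m ∈ S j) : 2 ≤ m.degree := two_le_degree_of_weight_triangularWeight hN hm.2
  refine ⟨y, h, fun j ↦ ?_, fun j ↦ ?_, fun j ↦ ?_, fun j ↦ ?_, fun j m hmd ↦ ?_⟩
  · refine mem_restrictSupport_iff_coeff.2 fun m hm ↦ ?_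
    rw [hy, ite_ne_right_iff] at hm
    exact ⟨hdeg hm.1, hm.1.1⟩
  · refine mem_restrictSupport_iff_coeff.2 fun m hm ↦ ?_
    rw [hh, ite_ne_right_iff] at hm
    exact ⟨⟨hdeg hm.1, hm.1.1⟩, hb j m (hdeg hm.1) hm.2⟩
  · refine mem_weightIdeal_iff.2 fun m hm ↦ ?_
    rw [hy, if_neg fun hmS ↦ by have := hmS.2; omega]
  · refine mem_weightIdeal_iff.2 fun m hm ↦ ?_
    rw [hh, if_neg fun hmS ↦ by have := hmS.2; omega]
  · rw [coeff_add, coeff_sub, coeff_C_mul, coeff_bind₁_C_mul_X, coeff_map, hy, hh]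
    have hmS : m ∈ S j ↔ Finsupp.weight (triangularWeight k) m + j = N := and_iff_right hmd
    simp only [← hmS]
    split_ifs with hmem
    · exact hcb j m (hdeg hmem)
    · simp

theorem HomologicallySolvable.exists_conjugacyError_coeff_eq_zero (hs : HomologicallySolvable σ A)
    (hA : ∀ i j, i < j → A i j = 0)
    (hf : ∀ j, f j - A.toMvPolynomial j ∈ idealOfVars (Fin k) R ^ 2) (d : ℕ) (hN : 4 * k ≤ N) :
    ∃ y h : Fin k → MvPolynomial (Fin k) R,
      (∀ j, y j ∈ restrictSupport R (nonlinearExponents k d)) ∧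
      (∀ j, h j ∈ restrictSupport R (lowerTriangularExponents k d j)) ∧
      ∀ (j : Fin k) m, m.degree ≤ d → Finsupp.weight (triangularWeight k) m + j < N →
        coeff m (conjugacyError σ f (X + y) (A.toMvPolynomial + h) j) = 0 := by
  induction N, hN using Nat.le_induction with
  | base =>
    refine ⟨0, 0, fun _ ↦ zero_mem _, fun _ ↦ zero_mem _, fun j m _ hm ↦ ?_⟩
    have herr : conjugacyError σ f (X + 0) (A.toMvPolynomial + 0) j =
        -(f j - A.toMvPolynomial j) := by
      simp [conjugacyError, bind₁_X_left]
    rw [herr, coeff_neg, neg_eq_zero]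
    exact mem_weightIdeal_iff.1 (idealOfVars_sq_le_weightIdeal_triangularWeight (hf j)) m (by omega)
  | succ N hN ih =>
    obtain ⟨y, h, hy, hh, herr⟩ := ih
    obtain ⟨y', h', hy', hh', hyN, hhN, hcoeff⟩ := hs.exists_level_correction d hN
      fun j ↦ -conjugacyError σ f (X + y) (A.toMvPolynomial + h) j
    refine ⟨y + y', h + h', fun j ↦ add_mem (hy j) (hy' j), fun j ↦ add_mem (hh j) (hh' j),
      fun j m hmd hm ↦ ?_⟩
    have hu (z : Fin k → MvPolynomial (Fin k) R)
        (hz : ∀ j, z j ∈ restrictSupport R (nonlinearExponents k d)) (j : Fin k) :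
        (X + z : Fin k → MvPolynomial (Fin k) R) j - X j ∈ idealOfVars (Fin k) R ^ 2 := by
      simpa using mem_idealOfVars_sq_of_mem_restrictSupport (hz j)
    have hg (j : Fin k) : (A.toMvPolynomial + h) j - A.toMvPolynomial j ∈
        idealOfVars (Fin k) R ^ 2 := by
      simpa using mem_idealOfVars_sq_of_mem_restrictSupport
        (mem_restrictSupport_nonlinearExponents (hh j))
    have hupdate := conjugacyError_add_sub_mem_weightIdeal (σ := σ) hA hf hg (hu y hy)
      (by simpa [add_assoc] using hu (y + y') fun j ↦ add_mem (hy j) (hy' j))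
      hyN hhN (by omega) j
    have hzero := mem_weightIdeal_iff.1 hupdate m (by omega)
    rw [coeff_sub, coeff_sub, hcoeff j m hmd, add_assoc, add_assoc] at hzero
    split_ifs at hzero with hmN
    · simpa using hzero
    · simpa [herr j m hmd (by omega)] using hzero

theorem HomologicallySolvable.exists_conjugacyError_mem (hs : HomologicallySolvable σ A)
    (hA : ∀ i j, i < j → A i j = 0)
    (hf : ∀ j, f j - A.toMvPolynomial j ∈ idealOfVars (Fin k) R ^ 2) (d : ℕ) :
    ∃ y h : Fin k → MvPolynomial (Fin k) R,
      (∀ j, y j ∈ restrictSupport R (nonlinearExponents k d)) ∧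
      (∀ j, h j ∈ restrictSupport R (lowerTriangularExponents k d j)) ∧
      ∀ j, conjugacyError σ f (X + y) (A.toMvPolynomial + h) j ∈
        idealOfVars (Fin k) R ^ (d + 1) := by
  obtain ⟨y, h, hy, hh, herr⟩ := hs.exists_conjugacyError_coeff_eq_zero hA hf d
    (le_add_self : 4 * k ≤ 3 * k * d + 4 * k)
  refine ⟨y, h, hy, hh, fun j ↦ (mem_pow_idealOfVars_iff' _ _).2 fun m hm ↦ ?_⟩
  refine herr j m (by omega) ?_
  have hle : 3 * k * m.degree ≤ 3 * k * d := by gcongr; omega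
  have := weight_triangularWeight_le m
  omega

end ConjugacyError

section BoundedSequences

open BoundedContinuousFunction

theorem exists_eq_mul_map_add {R : Type*} [NormedRing R] [CompleteSpace R] {σ : R →+ R}
    (hσ : ∀ x, ‖σ x‖ ≤ ‖x‖) {c : R} (hc : ‖c‖ < 1) (r : R) : ∃ y, y = c * σ y + r := by
  have hcontr : ContractingWith ‖c‖₊ fun y ↦ c * σ y + r := by
    refine ⟨hc, LipschitzWith.of_dist_le_mul fun x y ↦ ?_⟩
    rw [dist_add_right, dist_eq_norm, dist_eq_norm, ← mul_sub, ← map_sub]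
    exact (norm_mul_le _ _).trans (mul_le_mul_of_nonneg_left (hσ _) (norm_nonneg c))
  exact ⟨_, hcontr.fixedPoint_isFixedPt.symm⟩

variable {𝕜 : Type*} [NormedField 𝕜]

theorem exists_mul_eq_of_norm_le {ι : Type*} [TopologicalSpace ι] [DiscreteTopology ι]
    {a p : ι →ᵇ 𝕜} {C : ℝ} (hC : 0 ≤ C) (h : ∀ i, ‖p i‖ ≤ C * ‖a i‖) :
    ∃ q : ι →ᵇ 𝕜, a * q = p ∧ ‖q‖ ≤ C := by
  have hquot (i : ι) : ‖p i / a i‖ ≤ C := by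
    rw [norm_div]
    exact div_le_of_le_mul₀ (norm_nonneg _) hC (h i)
  refine ⟨ofNormedAddCommGroupDiscrete (fun i ↦ p i / a i) C hquot, ?_,
    (BoundedContinuousFunction.norm_le hC).2 hquot⟩
  ext i
  refine mul_div_cancel_of_imp' fun ha ↦ ?_
  simpa [ha] using h i

/-- Evaluation of bounded sequences at `n`, as a ring homomorphism. -/
def boundedSeqEval (n : ℕ) : (ℕ →ᵇ 𝕜) →+* 𝕜 where
  toFun x := x n
  map_one' := rfl
  map_mul' _ _ := rfl
  map_zero' := rfl
  map_add' _ _ := rfl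

/-- The left shift of bounded sequences, as a ring endomorphism. -/
def boundedSeqShift : (ℕ →ᵇ 𝕜) →+* (ℕ →ᵇ 𝕜) where
  toFun x := x.compContinuous ⟨(· + 1), continuous_of_discreteTopology⟩
  map_one' := rfl
  map_mul' _ _ := rfl
  map_zero' := rfl
  map_add' _ _ := rfl

theorem boundedSeqEval_comp_boundedSeqShift (n : ℕ) :
    (boundedSeqEval n).comp boundedSeqShift = boundedSeqEval (𝕜 := 𝕜) (n + 1) :=
  rfl

theorem norm_boundedSeqShift_le (x : ℕ →ᵇ 𝕜) : ‖boundedSeqShift x‖ ≤ ‖x‖ :=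
  (BoundedContinuousFunction.norm_le (norm_nonneg x)).2 fun n ↦ x.norm_coe_le_norm (n + 1)

theorem exists_mul_sub_boundedSeqShift_mul_eq [CompleteSpace 𝕜] {a p : ℕ →ᵇ 𝕜} {δ ξ : ℝ}
    (hδ : 0 < δ) (hξ : ξ < 1) (ha : ∀ n, δ ≤ ‖a n‖) (hp : ∀ n, ‖p n‖ ≤ ξ * ‖a n‖)
    (e : ℕ →ᵇ 𝕜) : ∃ y, a * y - boundedSeqShift y * p = e := by
  have hp' (n : ℕ) : ‖p n‖ ≤ max ξ 0 * ‖a n‖ :=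
    (hp n).trans (mul_le_mul_of_nonneg_right (le_max_left ξ 0) (norm_nonneg _))
  have he (n : ℕ) : ‖e n‖ ≤ ‖e‖ / δ * ‖a n‖ := calc
    ‖e n‖ ≤ ‖e‖ / δ * δ := by rw [div_mul_cancel₀ _ hδ.ne']; exact e.norm_coe_le_norm n
    _ ≤ ‖e‖ / δ * ‖a n‖ := by gcongr; exact ha n
  obtain ⟨c, hc, hc_norm⟩ := exists_mul_eq_of_norm_le (le_max_right ξ 0) hp'
  obtain ⟨r, hr, -⟩ := exists_mul_eq_of_norm_le (by positivity) he
  obtain ⟨y, hy⟩ := exists_eq_mul_map_add (σ := (boundedSeqShift : (ℕ →ᵇ 𝕜) →+* _).toAddMonoidHom)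
    norm_boundedSeqShift_le (hc_norm.trans_lt (max_lt hξ one_pos)) r
  refine ⟨y, ?_⟩
  calc a * y - boundedSeqShift y * p
      = a * (c * boundedSeqShift y + r) - boundedSeqShift y * (a * c) := by rw [hc]; congr 2
    _ = a * r := by ring
    _ = e := hr

theorem norm_prod_pow_le_of_two_le_degree {ι : Type*} {a : ι → 𝕜} (ha : ∀ i, ‖a i‖ ≤ 1) {C : ℝ}
    {l : ι} (hl : ∀ i, ‖a i‖ * ‖a l‖ ≤ C) {m : ι →₀ ℕ} (hm : 2 ≤ m.degree) (hml : m l ≠ 0) :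
    ‖m.prod fun i n ↦ a i ^ n‖ ≤ C := by
  classical
  obtain ⟨m, rfl⟩ := exists_add_of_le (Finsupp.single_le_iff.2 (Nat.one_le_iff_ne_zero.2 hml))
  have hm0 : m ≠ 0 := by
    rintro rfl
    simp at hm
  obtain ⟨i, hi⟩ := Finsupp.ne_iff.1 hm0
  obtain ⟨m, rfl⟩ := exists_add_of_le (Finsupp.single_le_iff.2 (Nat.one_le_iff_ne_zero.2 hi))
  have hrest : ‖m.prod fun i n ↦ a i ^ n‖ ≤ 1 := by
    rw [Finsupp.prod, norm_prod]
    refine Finset.prod_le_one (fun _ _ ↦ norm_nonneg _) fun i _ ↦ ?_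
    rw [norm_pow]
    exact pow_le_one₀ (norm_nonneg _) (ha i)
  have hprod (i : ι) (m : ι →₀ ℕ) : ((Finsupp.single i 1 + m).prod fun i n ↦ a i ^ n) =
      a i * m.prod fun i n ↦ a i ^ n := by
    rw [Finsupp.prod_add_index' (fun _ ↦ pow_zero _) (fun _ _ _ ↦ pow_add _ _ _)]
    simp
  rw [hprod, hprod, norm_mul, norm_mul]
  calc ‖a l‖ * (‖a i‖ * ‖m.prod fun i n ↦ a i ^ n‖) ≤ ‖a l‖ * (‖a i‖ * 1) := by gcongr
    _ = ‖a i‖ * ‖a l‖ := by ring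
    _ ≤ C := hl i

theorem homologicallySolvable_boundedSeqShift [CompleteSpace 𝕜] {k : ℕ}
    {A : Matrix (Fin k) (Fin k) (ℕ →ᵇ 𝕜)} {δ ξ : ℝ} (hδ : 0 < δ) (hξ : ξ < 1)
    (hlow : ∀ i n, δ ≤ ‖A i i n‖) (hup : ∀ i n, ‖A i i n‖ ≤ 1)
    (hres : ∀ n l j i, l ≤ j → ‖A i i n‖ * ‖A j j n‖ ≤ ξ * ‖A l l n‖) :
    HomologicallySolvable boundedSeqShift A := by
  rintro j m hm ⟨l, hjl, hml⟩ e
  refine exists_mul_sub_boundedSeqShift_mul_eq hδ hξ (hlow j) (fun n ↦ ?_) e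
  have heval : (m.prod fun i e ↦ A i i ^ e) n = m.prod fun i e ↦ A i i n ^ e :=
    map_finsuppProd (boundedSeqEval n) m _
  rw [heval]
  exact norm_prod_pow_le_of_two_le_degree (hup · n) (hres n j l · hjl) hm hml

end BoundedSequences

section Evaluation

open MvPolynomial

theorem sub_toMvPolynomial_mem_idealOfVars_sq {ι κ R : Type*} [Fintype ι] [CommRing R]
    {A : Matrix κ ι R} {p : MvPolynomial ι R} {j : κ} (h0 : coeff 0 p = 0)
    (h1 : ∀ i, coeff (Finsupp.single i 1) p = A j i) :
    p - A.toMvPolynomial j ∈ idealOfVars ι R ^ 2 := by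
  classical
  refine (mem_pow_idealOfVars_iff' _ _).2 fun m hm ↦ ?_
  have hcases : m = 0 ∨ ∃ i, m = Finsupp.single i 1 := by
    rcases Nat.le_one_iff_eq_zero_or_eq_one.1 (Nat.le_of_lt_succ hm) with hm | hm
    · exact .inl ((Finsupp.degree_eq_zero_iff m).1 hm)
    · exact .inr (by simpa [eq_comm] using Finsupp.range_single_one.superset hm)
  rcases hcases with rfl | ⟨i, rfl⟩
  · simp [Matrix.toMvPolynomial, coeff_sum, h0]
  · simp [Matrix.toMvPolynomial, coeff_sum, coeff_monomial, h1, Finsupp.single_left_inj]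

theorem exists_norm_eval_le {ι R : Type*} [SeminormedCommRing R] (p : MvPolynomial ι R) (r : ℝ) :
    ∃ C, ∀ v : ι → R, (∀ i, ‖v i‖ ≤ r) → ‖eval v p‖ ≤ C := by
  induction p using MvPolynomial.induction_on with
  | C a => exact ⟨‖a‖, by simp⟩
  | add p q hp hq =>
    obtain ⟨C, hC⟩ := hp
    obtain ⟨C', hC'⟩ := hq
    exact ⟨C + C', fun v hv ↦ by rw [map_add]; exact norm_add_le_of_le (hC v hv) (hC' v hv)⟩
  | mul_X p i hp =>
    obtain ⟨C, hC⟩ := hp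
    exact ⟨C * r, fun v hv ↦ by rw [map_mul, eval_X]; exact norm_mul_le_of_le (hC v hv) (hv i)⟩

variable {ι R : Type*} [NormedCommRing R] [NormedAlgebra ℂ R]

theorem continuous_scalarCoords :
    Continuous (scalarCoords R : EuclideanSpace ℂ ι → ι → R) :=
  continuous_pi fun i ↦ (continuous_algebraMap ℂ R).comp (PiLp.continuous_apply 2 _ i)

theorem scalarCoords_zero : scalarCoords R (0 : EuclideanSpace ℂ ι) = 0 := by
  ext
  simp [scalarCoords]

theorem hasStrictFDerivAt_eval [Finite ι] (p : MvPolynomial ι R) (v : ι → R) :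
    HasStrictFDerivAt (fun w : ι → R ↦ eval w p) (fderiv ℂ (fun w : ι → R ↦ eval w p) v) v := by
  cases nonempty_fintype ι
  exact (AnalyticOnNhd.eval_continuousLinearMap (.id ℂ (ι → R)) p v
    (Set.mem_univ v)).hasStrictFDerivAt

variable [Fintype ι]

theorem isBigO_scalarCoords : (scalarCoords R : EuclideanSpace ℂ ι → ι → R) =O[𝓝 0] norm := by
  refine Asymptotics.isBigO_pi.2 fun i ↦ .of_bound ‖(1 : R)‖ (.of_forall fun z ↦ ?_)
  rw [scalarCoords, norm_algebraMap, mul_comm, norm_norm]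
  gcongr
  exact PiLp.norm_apply_le z i

theorem isBigO_eval_sub_eval {α : Type*} {l : Filter α} {v w : α → ι → R} {a : ι → R}
    (hv : Tendsto v l (𝓝 a)) (hw : Tendsto w l (𝓝 a)) (p : MvPolynomial ι R) :
    (fun x ↦ eval (v x) p - eval (w x) p) =O[l] fun x ↦ v x - w x := by
  have hlip := (hasStrictFDerivAt_eval p a).isBigO_sub.comp_tendsto (hv.prodMk_nhds hw)
  simpa only [Function.comp_def] using hlip

theorem isBigO_eval_scalarCoords {p : MvPolynomial ι R} {n : ℕ}
    (hp : p ∈ idealOfVars ι R ^ n) :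
    (fun z : EuclideanSpace ℂ ι ↦ eval (scalarCoords R z) p) =O[𝓝 0] fun z ↦ ‖z‖ ^ n := by
  have htendsto : Tendsto (scalarCoords R) (𝓝 (0 : EuclideanSpace ℂ ι)) (𝓝 0) :=
    continuous_scalarCoords.tendsto' 0 0 scalarCoords_zero
  induction n generalizing p with
  | zero =>
    simpa using ((hasStrictFDerivAt_eval p 0).continuousAt.tendsto.comp htendsto).isBigO_one ℝ
  | succ n ih =>
    rw [pow_succ] at hp
    induction hp using Submodule.mul_induction_on' with
    | mem_mul_mem p hp q hq =>
      have hq0 : constantCoeff q = 0 := by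
        refine (Ideal.span_le (I := RingHom.ker constantCoeff)).2 ?_ hq
        rintro _ ⟨i, rfl⟩
        simp
      have hqO := (isBigO_eval_sub_eval htendsto tendsto_const_nhds q).trans
        (by simpa using isBigO_scalarCoords)
      simpa [pow_succ, hq0] using (ih hp).mul hqO
    | add p _ q _ hp hq => simpa using hp.add hq

theorem isBigO_eval_sub_eval_of_conjugacyError_mem {k n : ℕ} {σ : R →+* R}
    {f u g : Fin k → MvPolynomial (Fin k) R} {Φ : Fin k → EuclideanSpace ℂ (Fin k) → R} {j : Fin k}
    (herr : conjugacyError σ f u g j ∈ idealOfVars (Fin k) R ^ (n + 1))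
    (hf : ∀ i, (fun z ↦ Φ i z - eval (scalarCoords R z) (f i)) =O[𝓝 0] fun z ↦ ‖z‖ ^ (n + 1)) :
    (fun z ↦ eval (fun i ↦ eval (scalarCoords R z) (u i)) (g j) -
      eval (fun i ↦ Φ i z) (map σ (u j))) =O[𝓝 0] fun z ↦ ‖z‖ ^ (n + 1) := by
  have hlim : Tendsto (fun (z : EuclideanSpace ℂ (Fin k)) i ↦ eval (scalarCoords R z) (f i)) (𝓝 0)
      (𝓝 fun i ↦ eval 0 (f i)) := tendsto_pi_nhds.2 fun i ↦
    (hasStrictFDerivAt_eval (f i) 0).continuousAt.tendsto.comp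
      (continuous_scalarCoords.tendsto' 0 0 scalarCoords_zero)
  have hdiff : (fun z i ↦ eval (scalarCoords R z) (f i) - Φ i z) =O[𝓝 0] fun z ↦ ‖z‖ ^ (n + 1) :=
    Asymptotics.isBigO_pi.2 fun i ↦ by simpa using (hf i).neg_left
  have hlimΦ : Tendsto (fun z i ↦ Φ i z) (𝓝 0) (𝓝 fun i ↦ eval 0 (f i)) := by
    have hzero : Tendsto (fun z : EuclideanSpace ℂ (Fin k) ↦ ‖z‖ ^ (n + 1)) (𝓝 0) (𝓝 0) :=
      Continuous.tendsto' (by fun_prop) _ _ (by simp)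
    simpa [Pi.sub_def] using hlim.sub (hdiff.trans_tendsto hzero)
  have hcomp := (isBigO_eval_sub_eval hlim hlimΦ (map σ (u j))).trans hdiff
  refine ((isBigO_eval_scalarCoords herr).add hcomp).congr_left fun z ↦ ?_
  have hbind (v : Fin k → MvPolynomial (Fin k) R) (p : MvPolynomial (Fin k) R) :
      eval (scalarCoords R z) (bind₁ v p) = eval (fun i ↦ eval (scalarCoords R z) (v i)) p :=
    eval₂Hom_bind₁ _ _ _ _
  rw [conjugacyError, map_sub, hbind, hbind, sub_add_sub_cancel]

theorem exists_norm_le_mul_pow_of_isBigO {E F : Type*} [SeminormedAddCommGroup E]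
    [SeminormedAddCommGroup F] {f : E → F} {n : ℕ} (hf : f =O[𝓝 0] fun z ↦ ‖z‖ ^ n) {s : Set E}
    {M : ℝ} (hM : ∀ z ∈ s, ‖f z‖ ≤ M) : ∃ C > 0, ∀ z ∈ s, ‖f z‖ ≤ C * ‖z‖ ^ n := by
  obtain ⟨C, hC⟩ := hf.bound
  obtain ⟨r, hr, hball⟩ := Metric.eventually_nhds_iff_ball.1 hC
  refine ⟨max (max C (M / r ^ n)) 1, lt_max_of_lt_right one_pos, fun z hz ↦ ?_⟩
  by_cases hzr : z ∈ ball 0 r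
  · refine (hball z hzr).trans ?_
    rw [norm_pow, norm_norm]
    gcongr
    exact (le_max_left _ _).trans (le_max_left _ _)
  · have hzr : r ≤ ‖z‖ := by simpa using hzr
    have : 0 ≤ M := (norm_nonneg _).trans (hM z hz)
    calc ‖f z‖ ≤ M / r ^ n * r ^ n := by rw [div_mul_cancel₀ _ (by positivity)]; exact hM z hz
      _ ≤ _ := by gcongr; exact (le_max_right _ _).trans (le_max_left _ _)

end Evaluation

section Estimate

open MvPolynomial

theorem exists_norm_conjugacy_defect_le {R : Type*} [NormedCommRing R] [NormedAlgebra ℂ R]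
    {k n : ℕ} {σ : R →+* R} {f u g : Fin k → MvPolynomial (Fin k) R} {Φ : Fin k → Ck k → R}
    {j : Fin k} {M : ℝ} (herr : conjugacyError σ f u g j ∈ idealOfVars (Fin k) R ^ (n + 1))
    (hf : ∀ i, (fun z ↦ Φ i z - eval (scalarCoords R z) (f i)) =O[𝓝 0] fun z ↦ ‖z‖ ^ (n + 1))
    (hΦ : ∀ i, ∀ z ∈ ball (0 : Ck k) 1, ‖Φ i z‖ ≤ M) :
    ∃ C > 0, ∀ z ∈ ball (0 : Ck k) 1, ‖eval (fun i ↦ eval (scalarCoords R z) (u i)) (g j) -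
      eval (fun i ↦ Φ i z) (map σ (u j))‖ ≤ C * ‖z‖ ^ (n + 1) := by
  have hcoord (z : Ck k) (hz : z ∈ ball 0 1) (i : Fin k) : ‖scalarCoords R z i‖ ≤ ‖(1 : R)‖ := by
    rw [scalarCoords, norm_algebraMap]
    exact mul_le_of_le_one_left (norm_nonneg _)
      ((PiLp.norm_apply_le z i).trans (mem_ball_zero_iff.1 hz).le)
  choose Mu hMu using fun i ↦ exists_norm_eval_le (u i) ‖(1 : R)‖
  obtain ⟨r, hr⟩ := (Set.finite_range Mu).bddAbove
  obtain ⟨Mg, hMg⟩ := exists_norm_eval_le (g j) r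
  obtain ⟨MΦ, hMΦ⟩ := exists_norm_eval_le (map σ (u j)) M
  refine exists_norm_le_mul_pow_of_isBigO (isBigO_eval_sub_eval_of_conjugacyError_mem herr hf)
    (M := Mg + MΦ) fun z hz ↦ norm_sub_le_of_le (hMg _ fun i ↦ ?_) (hMΦ _ fun i ↦ hΦ i z hz)
  exact (hMu i _ (hcoord z hz)).trans (hr (Set.mem_range_self i))

end Estimate

section NormalForm

open MvPolynomial

variable {k d : ℕ} {R S : Type*} [CommRing R] [CommRing S] (φ : R →+* S)
  {A : Matrix (Fin k) (Fin k) R} {h : Fin k → MvPolynomial (Fin k) R}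

theorem coeff_eq_zero_of_mem_restrictSupport_nonlinearExponents {p : MvPolynomial (Fin k) R}
    (hp : p ∈ restrictSupport R (nonlinearExponents k d)) {m : Fin k →₀ ℕ} (hm : m.degree < 2) :
    coeff m p = 0 := by
  by_contra hne
  exact hm.not_ge (mem_restrictSupport_iff_coeff.1 hp m hne).1

theorem coeff_zero_map_toMvPolynomial_add
    (hh : ∀ j, h j ∈ restrictSupport R (nonlinearExponents k d)) (j : Fin k) :
    coeff 0 (map φ ((A.toMvPolynomial + h) j)) = 0 := by
  rw [coeff_map, Pi.add_apply, coeff_add,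
    coeff_eq_zero_of_mem_restrictSupport_nonlinearExponents (hh j) (by simp), add_zero,
    ← constantCoeff_eq, Matrix.toMvPolynomial_constantCoeff, map_zero]

theorem coeff_single_map_toMvPolynomial_add
    (hh : ∀ j, h j ∈ restrictSupport R (nonlinearExponents k d)) (j i : Fin k) :
    coeff (Finsupp.single i 1) (map φ ((A.toMvPolynomial + h) j)) = φ (A j i) := by
  classical
  rw [coeff_map, Pi.add_apply, coeff_add,
    coeff_eq_zero_of_mem_restrictSupport_nonlinearExponents (hh j) (by simp)]
  simp [Matrix.toMvPolynomial, coeff_sum, coeff_monomial, Finsupp.single_left_inj]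

theorem totalDegree_map_toMvPolynomial_add_le (hd : 1 ≤ d)
    (hh : ∀ j, h j ∈ restrictSupport R (nonlinearExponents k d)) (j : Fin k) :
    (map φ ((A.toMvPolynomial + h) j)).totalDegree ≤ d := by
  have hh_degree : (h j).totalDegree ≤ d := Finset.sup_le fun m hm ↦ (hh j hm).2
  calc (map φ ((A.toMvPolynomial + h) j)).totalDegree
      ≤ ((A.toMvPolynomial + h) j).totalDegree := Finset.sup_mono (support_map_subset φ _)
    _ ≤ max (A.toMvPolynomial j).totalDegree (h j).totalDegree := totalDegree_add _ _
    _ ≤ d := max_le ((A.toMvPolynomial_totalDegree_le j).trans hd) hh_degree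

theorem lowerTriPolyMap_map_toMvPolynomial_add (φ : R →+* ℂ) (hA : ∀ i j, i < j → A i j = 0)
    (hh : ∀ j, h j ∈ restrictSupport R (lowerTriangularExponents k d j)) :
    LowerTriPolyMap fun j ↦ map φ ((A.toMvPolynomial + h) j) := by
  classical
  refine fun j ↦ ⟨coeff_zero_map_toMvPolynomial_add φ
    (fun j ↦ mem_restrictSupport_nonlinearExponents (hh j)) j, fun m hm ↦ ?_⟩
  rcases Finset.mem_union.1 (support_add (support_map_subset φ _ hm)) with hm | hm
  · obtain ⟨i, -, hi⟩ := Finset.mem_biUnion.1 (support_sum hm)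
    obtain rfl := Finset.mem_singleton.1 (support_monomial_subset hi)
    have hij : ¬ j < i := fun hji ↦ by simp [hA j i hji] at hi
    rcases (not_lt.1 hij).eq_or_lt with rfl | hij
    · exact .inl rfl
    · exact .inr fun l hjl ↦ Finsupp.single_eq_of_ne (hij.trans_le hjl).ne'
  · exact .inr (hh j hm).2

end NormalForm

section PolyMapTerm

open MvPolynomial BoundedContinuousFunction

variable {𝕜 ι κ : Type*} [NormedField 𝕜]

/-- The `n`-th member of the sequence of polynomial maps that a single polynomial map over the ring
of bounded sequences stands for. -/
def polyMapTerm (p : κ → MvPolynomial ι (ℕ →ᵇ 𝕜)) (n : ℕ) (j : κ) : MvPolynomial ι 𝕜 :=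
  map (boundedSeqEval n) (p j)

theorem exists_norm_coeff_polyMapTerm_le [Finite κ]
    (p : κ → MvPolynomial ι (ℕ →ᵇ 𝕜)) :
    ∃ M, ∀ n j m, ‖coeff m (polyMapTerm p n j)‖ ≤ M := by
  have hfin : (⋃ j, Set.range fun m ↦ ‖coeff m (p j)‖).Finite := by
    refine Set.finite_iUnion fun j ↦ (((p j).support.finite_toSet.image fun m ↦
      ‖coeff m (p j)‖).insert 0).subset ?_
    rintro _ ⟨m, rfl⟩
    by_cases hm : coeff m (p j) = 0
    · simp [hm]
    · exact .inr ⟨m, by simpa using hm, rfl⟩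
  obtain ⟨M, hM⟩ := hfin.bddAbove
  refine ⟨M, fun n j m ↦ ?_⟩
  rw [polyMapTerm, coeff_map]
  exact ((coeff m (p j)).norm_coe_le_norm n).trans (hM (Set.mem_iUnion.2 ⟨j, m, rfl⟩))

end PolyMapTerm

section Derivative

variable {E F : Type*} [NormedAddCommGroup E] [NormedSpace ℂ E] [NormedAddCommGroup F]
  [NormedSpace ℂ F] {f : E → F}

theorem norm_fderiv_le_of_norm_le_mul (hf : DifferentiableAt ℂ f 0) (hf0 : f 0 = 0) {b : ℝ}
    (hb : 0 ≤ b) (hbound : ∀ᶠ z in 𝓝 0, ‖f z‖ ≤ b * ‖z‖) : ‖fderiv ℂ f 0‖ ≤ b :=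
  hf.hasFDerivAt.le_of_lip' hb (by simpa [hf0] using hbound)

theorem mul_norm_le_norm_fderiv_apply (hf : DifferentiableAt ℂ f 0) (hf0 : f 0 = 0) {a : ℝ}
    (hbound : ∀ᶠ z in 𝓝 0, a * ‖z‖ ≤ ‖f z‖) (v : E) : a * ‖v‖ ≤ ‖fderiv ℂ f 0 v‖ := by
  have hlim := (hf.hasFDerivAt.hasLineDerivAt v).tendsto_slope_zero.norm
  refine ge_of_tendsto hlim ?_
  have hsmul : Tendsto (fun t : ℂ ↦ t • v) (𝓝[≠] 0) (𝓝 0) :=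
    (Continuous.tendsto' (by fun_prop) 0 0 (zero_smul ℂ v)).mono_left nhdsWithin_le_nhds
  filter_upwards [hsmul.eventually hbound, self_mem_nhdsWithin] with t ht ht0
  have ht0 : 0 < ‖t‖ := norm_pos_iff.2 ht0
  simp only [zero_add, hf0, sub_zero, norm_smul, norm_inv] at ht ⊢
  rw [← div_eq_inv_mul, le_div_iff₀ ht0]
  linarith

end Derivative

section DerivMatrix

variable {k : ℕ} {F : Ck k → Ck k}

theorem norm_derivMatrix_le (i j : Fin k) : ‖derivMatrix F i j‖ ≤ ‖fderiv ℂ F 0‖ :=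
  (PiLp.norm_apply_le (fderiv ℂ F 0 (EuclideanSpace.single j 1)) i).trans
    (by simpa using (fderiv ℂ F 0).le_opNorm (EuclideanSpace.single j 1))

theorem fderiv_single_last {k : ℕ} {F : Ck (k + 1) → Ck (k + 1)} (hF : LowerTriAtZero F) :
    fderiv ℂ F 0 (EuclideanSpace.single (Fin.last k) 1) =
      EuclideanSpace.single (Fin.last k) (derivMatrix F (Fin.last k) (Fin.last k)) := by
  ext i
  rcases (Fin.le_last i).eq_or_lt with rfl | hi
  · simp [derivMatrix]
  · rw [← derivMatrix, hF i _ hi]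
    simp [hi.ne]

/-- The last column of a lower triangular matrix is a multiple of a basis vector, so the lower bound
on `F` bounds the last eigenvalue; the absence of resonances bounds the others in terms of it. -/
theorem sq_le_norm_derivMatrix_diag {a ξ : ℝ} (ha : 0 ≤ a) (hξ : ξ ≤ 1) (hF : LowerTriAtZero F)
    (hlow : ∀ v, a * ‖v‖ ≤ ‖fderiv ℂ F 0 v‖)
    (hres : ∀ l j i : Fin k, l ≤ j →
      ‖derivMatrix F i i‖ * ‖derivMatrix F j j‖ ≤ ξ * ‖derivMatrix F l l‖) (i : Fin k) :
    a ^ 2 ≤ ‖derivMatrix F i i‖ := by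
  obtain ⟨k, rfl⟩ := Nat.exists_eq_add_one_of_ne_zero i.pos.ne'
  have hlast : a ≤ ‖derivMatrix F (Fin.last k) (Fin.last k)‖ := by
    simpa [fderiv_single_last hF] using hlow (EuclideanSpace.single (Fin.last k) 1)
  calc a ^ 2 ≤ ‖derivMatrix F (Fin.last k) (Fin.last k)‖ *
        ‖derivMatrix F (Fin.last k) (Fin.last k)‖ := by rw [pow_two]; gcongr
    _ ≤ ξ * ‖derivMatrix F i i‖ := hres i _ _ (Fin.le_last i)
    _ ≤ ‖derivMatrix F i i‖ := mul_le_of_le_one_left (norm_nonneg _) hξ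

end DerivMatrix

section Conjugacy

open MvPolynomial BoundedContinuousFunction

variable {k d : ℕ} {F : ℕ → Ck k → Ck k}

theorem exists_taylor_boundedSeq (hF : ∀ n, DifferentiableOn ℂ (F n) (ball 0 1))
    {M : ℝ} (hM : ∀ n, ∀ z ∈ ball (0 : Ck k) 1, ‖F n z‖ ≤ M) (hd : 1 ≤ d) (j : Fin k) :
    ∃ (Φ : Ck k → ℕ →ᵇ ℂ) (f : MvPolynomial (Fin k) (ℕ →ᵇ ℂ)),
      (∀ z ∈ ball (0 : Ck k) 1, ∀ n, Φ z n = F n z j) ∧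
      (∀ n, coeff 0 f n = F n 0 j) ∧
      (∀ i n, coeff (Finsupp.single i 1) f n = derivMatrix (F n) j i) ∧
      (fun z ↦ Φ z - eval (scalarCoords (ℕ →ᵇ ℂ) z) f) =O[𝓝 0] fun z ↦ ‖z‖ ^ (d + 1) := by
  let π : Ck k →L[ℂ] ℂ := EuclideanSpace.proj j
  have h0 : (0 : Ck k) ∈ ball 0 1 := mem_ball_self one_pos
  have hball : ball (0 : Ck k) 1 ∈ 𝓝 0 := ball_mem_nhds 0 one_pos
  obtain ⟨Φ, hΦ, hΦF⟩ := exists_differentiableOn_boundedContinuousFunction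
    (f := fun n z ↦ π (F n z)) (fun n ↦ π.differentiable.comp_differentiableOn (hF n))
    fun n z hz ↦ (PiLp.norm_apply_le (F n z) j).trans (hM n z hz)
  obtain ⟨f, hf0, hf1, hf⟩ := exists_taylor_polynomial isOpen_ball h0 hΦ hd
  refine ⟨Φ, f, hΦF, fun n ↦ by rw [hf0, hΦF 0 h0]; rfl, fun i n ↦ ?_, hf⟩
  have hderiv_left : HasFDerivAt (fun z ↦ Φ z n) ((evalCLM ℂ n).comp (fderiv ℂ Φ 0)) 0 :=
    (evalCLM (β := ℂ) ℂ n).hasFDerivAt.comp 0 (hΦ.differentiableAt hball).hasFDerivAt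
  have hderiv_right : HasFDerivAt (fun z ↦ π (F n z)) (π.comp (fderiv ℂ (F n) 0)) 0 :=
    π.hasFDerivAt.comp 0 ((hF n).differentiableAt hball).hasFDerivAt
  have heq : (fun z ↦ Φ z n) =ᶠ[𝓝 0] fun z ↦ π (F n z) :=
    eventually_of_mem hball fun z hz ↦ hΦF z hz n
  rw [hf1]
  exact congr($(hderiv_left.unique (hderiv_right.congr_of_eventuallyEq heq))
    (EuclideanSpace.single i 1))

theorem evalPolyMap_sub_evalPolyMap_apply {u g : Fin k → MvPolynomial (Fin k) (ℕ →ᵇ ℂ)}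
    {φ : Fin k → ℕ →ᵇ ℂ} {n : ℕ} {w : Ck k} (hφ : ∀ i, φ i n = w i) (z : Ck k) (j : Fin k) :
    (evalPolyMap (polyMapTerm g n) (evalPolyMap (polyMapTerm u n) z) -
      evalPolyMap (polyMapTerm u (n + 1)) w) j =
    (eval (fun i ↦ eval (scalarCoords (ℕ →ᵇ ℂ) z) (u i)) (g j) -
      eval φ (map boundedSeqShift (u j))) n := by
  have heval (v : Fin k → ℕ →ᵇ ℂ) (p : MvPolynomial (Fin k) (ℕ →ᵇ ℂ)) :
      eval v p n = eval (fun i ↦ v i n) (map (boundedSeqEval n) p) :=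
    map_eval (boundedSeqEval n) v p
  have hcoords (i : Fin k) : scalarCoords (ℕ →ᵇ ℂ) z i n = z i := by
    simp [scalarCoords, Algebra.algebraMap_eq_smul_one]
  rw [BoundedContinuousFunction.sub_apply, heval, heval, MvPolynomial.map_map,
    boundedSeqEval_comp_boundedSeqShift]
  simp only [heval, hφ, hcoords]
  rfl

theorem norm_le_sum_norm_apply {ι : Type*} [Fintype ι] (v : EuclideanSpace ℂ ι) :
    ‖v‖ ≤ ∑ j, ‖v j‖ := by
  classical
  calc ‖v‖ = ‖∑ j, v j • EuclideanSpace.basisFun ι ℂ j‖ := by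
        simpa using congr(‖$((EuclideanSpace.basisFun ι ℂ).sum_repr v)‖).symm
    _ ≤ ∑ j, ‖v j‖ := norm_sum_le_of_le _ fun j _ ↦ by simp [norm_smul]

theorem exists_norm_evalPolyMap_sub_le {u g f : Fin k → MvPolynomial (Fin k) (ℕ →ᵇ ℂ)}
    {Φ : Fin k → Ck k → ℕ →ᵇ ℂ} {M : ℝ}
    (herr : ∀ j, conjugacyError boundedSeqShift f u g j ∈ idealOfVars (Fin k) (ℕ →ᵇ ℂ) ^ (d + 1))
    (hΦ : ∀ i, (fun z ↦ Φ i z - eval (scalarCoords (ℕ →ᵇ ℂ) z) (f i)) =O[𝓝 0]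
      fun z ↦ ‖z‖ ^ (d + 1))
    (hΦF : ∀ i, ∀ z ∈ ball (0 : Ck k) 1, ∀ n, Φ i z n = F n z i)
    (hM : ∀ n, ∀ z ∈ ball (0 : Ck k) 1, ‖F n z‖ ≤ M) :
    ∃ C > 0, ∀ n, ∀ z ∈ ball (0 : Ck k) 1,
      ‖evalPolyMap (polyMapTerm g n) (evalPolyMap (polyMapTerm u n) z) -
        evalPolyMap (polyMapTerm u (n + 1)) (F n z)‖ ≤ C * ‖z‖ ^ (d + 1) := by
  have hΦM (i : Fin k) (z : Ck k) (hz : z ∈ ball 0 1) : ‖Φ i z‖ ≤ M :=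
    norm_le_of_nonempty.2 fun n ↦ by
      rw [hΦF i z hz n]
      exact (PiLp.norm_apply_le (F n z) i).trans (hM n z hz)
  choose C hC hbound using fun j ↦ exists_norm_conjugacy_defect_le (herr j) hΦ hΦM
  have hsum : 0 ≤ ∑ j, C j := Finset.sum_nonneg fun j _ ↦ (hC j).le
  refine ⟨1 + ∑ j, C j, by positivity, fun n z hz ↦ (norm_le_sum_norm_apply _).trans ?_⟩
  calc _ ≤ ∑ j, C j * ‖z‖ ^ (d + 1) := Finset.sum_le_sum fun j _ ↦ by
        rw [evalPolyMap_sub_evalPolyMap_apply (fun i ↦ hΦF i z hz n)]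
        exact (norm_coe_le_norm _ n).trans (hbound j z hz)
    _ ≤ (1 + ∑ j, C j) * ‖z‖ ^ (d + 1) := by
        rw [← Finset.sum_mul]
        gcongr
        exact le_add_of_nonneg_left zero_le_one

theorem UniformlyAttracting.apply_zero (hua : UniformlyAttracting F) (n : ℕ) : F n 0 = 0 := by
  obtain ⟨a, b, -, -, -, hattr, -⟩ := hua
  simpa using (hattr n 0 (mem_ball_self one_pos)).2

theorem UniformlyAttracting.norm_le_one (hua : UniformlyAttracting F) (n : ℕ) {z : Ck k}
    (hz : z ∈ ball 0 1) : ‖F n z‖ ≤ 1 := by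
  obtain ⟨a, b, -, -, hb, hattr, -⟩ := hua
  exact (hattr n z hz).2.trans (mul_le_one₀ hb.le (norm_nonneg z) (mem_ball_zero_iff.1 hz).le)

theorem UniformlyAttracting.exists_le_norm_derivMatrix_diag_le_one (hua : UniformlyAttracting F)
    (hF : ∀ n, DifferentiableAt ℂ (F n) 0) (htri : ∀ n, LowerTriAtZero (F n)) :
    ∃ δ > 0, ∀ n i, δ ≤ ‖derivMatrix (F n) i i‖ ∧ ‖derivMatrix (F n) i i‖ ≤ 1 := by
  have hF0 := hua.apply_zero
  obtain ⟨a, b, ha, hab, hb, hattr, ξ, hξ, hres⟩ := hua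
  have hball : ball (0 : Ck k) 1 ∈ 𝓝 0 := ball_mem_nhds 0 one_pos
  refine ⟨a ^ 2, pow_pos ha 2, fun n i ↦ ⟨?_, ?_⟩⟩
  · exact sq_le_norm_derivMatrix_diag ha.le hξ.le (htri n) (mul_norm_le_norm_fderiv_apply (hF n)
      (hF0 n) (eventually_of_mem hball fun z hz ↦ (hattr n z hz).1)) (hres n) i
  · calc ‖derivMatrix (F n) i i‖ ≤ ‖fderiv ℂ (F n) 0‖ := norm_derivMatrix_le i i
      _ ≤ b := norm_fderiv_le_of_norm_le_mul (hF n) (hF0 n) (ha.trans hab).le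
        (eventually_of_mem hball fun z hz ↦ (hattr n z hz).2)
      _ ≤ 1 := hb.le

theorem UniformlyAttracting.homologicallySolvable (hua : UniformlyAttracting F)
    (hF : ∀ n, DifferentiableAt ℂ (F n) 0) (htri : ∀ n, LowerTriAtZero (F n))
    {A : Matrix (Fin k) (Fin k) (ℕ →ᵇ ℂ)} (hA : ∀ j i n, A j i n = derivMatrix (F n) j i) :
    HomologicallySolvable boundedSeqShift A := by
  obtain ⟨δ, hδ, hdiag⟩ := hua.exists_le_norm_derivMatrix_diag_le_one hF htri
  obtain ⟨-, -, -, -, -, -, ξ, hξ, hres⟩ := hua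
  refine homologicallySolvable_boundedSeqShift hδ hξ (fun i n ↦ ?_) (fun i n ↦ ?_) ?_
  · simpa only [hA] using (hdiag n i).1
  · simpa only [hA] using (hdiag n i).2
  · simpa only [hA] using hres

theorem UniformlyAttracting.exists_boundedSeq_conjugacy (hua : UniformlyAttracting F)
    (hF : ∀ n, DifferentiableOn ℂ (F n) (ball 0 1)) (htri : ∀ n, LowerTriAtZero (F n))
    (hd : 1 ≤ d) :
    ∃ (A : Matrix (Fin k) (Fin k) (ℕ →ᵇ ℂ)) (y h : Fin k → MvPolynomial (Fin k) (ℕ →ᵇ ℂ)),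
      (∀ j i n, A j i n = derivMatrix (F n) j i) ∧
      (∀ i j, i < j → A i j = 0) ∧
      (∀ j, y j ∈ restrictSupport _ (nonlinearExponents k d)) ∧
      (∀ j, h j ∈ restrictSupport _ (lowerTriangularExponents k d j)) ∧
      ∃ C > 0, ∀ n, ∀ z ∈ ball (0 : Ck k) 1,
        ‖evalPolyMap (polyMapTerm (A.toMvPolynomial + h) n)
            (evalPolyMap (polyMapTerm (X + y) n) z) -
          evalPolyMap (polyMapTerm (X + y) (n + 1)) (F n z)‖ ≤ C * ‖z‖ ^ (d + 1) := by
  have hF1 (n : ℕ) : ∀ z ∈ ball (0 : Ck k) 1, ‖F n z‖ ≤ 1 := fun z ↦ hua.norm_le_one n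
  choose Φ f hΦF hf0 hf1 hf using exists_taylor_boundedSeq hF hF1 hd
  let A : Matrix (Fin k) (Fin k) (ℕ →ᵇ ℂ) := fun j i ↦ coeff (Finsupp.single i 1) (f j)
  have hA (j i : Fin k) (n : ℕ) : A j i n = derivMatrix (F n) j i := hf1 j i n
  have hA_tri (i j : Fin k) (hij : i < j) : A i j = 0 :=
    BoundedContinuousFunction.ext fun n ↦ by simpa [hA] using htri n i j hij
  have hf_lin (j : Fin k) : f j - A.toMvPolynomial j ∈ idealOfVars (Fin k) (ℕ →ᵇ ℂ) ^ 2 :=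
    sub_toMvPolynomial_mem_idealOfVars_sq
      (BoundedContinuousFunction.ext fun n ↦ by simp [hf0, hua.apply_zero]) fun i ↦ rfl
  have hsolv := hua.homologicallySolvable
    (fun n ↦ (hF n).differentiableAt (ball_mem_nhds 0 one_pos)) htri hA
  obtain ⟨y, h, hy, hh, herr⟩ := hsolv.exists_conjugacyError_mem hA_tri hf_lin d
  exact ⟨A, y, h, hA, hA_tri, hy, hh, exists_norm_evalPolyMap_sub_le herr hf hΦF hF1⟩

end Conjugacy

theorem bounded_conjugating_sequences_general (k : ℕ) (F : ℕ → Ck k → Ck k)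
    (hF : ∀ n, DifferentiableOn ℂ (F n) (ball 0 1)) (htri : ∀ n, LowerTriAtZero (F n))
    (hua : UniformlyAttracting F) (d : ℕ) (hd : 1 ≤ d) :
    ∃ C : ℝ, 0 < C ∧
    ∃ X : ℕ → Fin k → MvPolynomial (Fin k) ℂ,
      (∀ n j, (X n j).totalDegree ≤ d) ∧
      (∀ n j, (X n j).coeff 0 = 0) ∧
      (∀ n (j i : Fin k), (X n j).coeff (Finsupp.single i 1) = if i = j then 1 else 0) ∧
      (∃ MX : ℝ, ∀ n j m, ‖(X n j).coeff m‖ ≤ MX) ∧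
    ∃ G : ℕ → Fin k → MvPolynomial (Fin k) ℂ,
      (∀ n, LowerTriPolyMap (G n)) ∧
      (∃ DG : ℕ, ∀ n j, (G n j).totalDegree ≤ DG) ∧
      (∃ MG : ℝ, ∀ n j m, ‖(G n j).coeff m‖ ≤ MG) ∧
      (∀ n (j i : Fin k), (G n j).coeff (Finsupp.single i 1) = derivMatrix (F n) j i) ∧
      ∀ n, ∀ z ∈ ball (0 : Ck k) 1,
        ‖evalPolyMap (G n) (evalPolyMap (X n) z) - evalPolyMap (X (n + 1)) (F n z)‖
          ≤ C * ‖z‖ ^ (d + 1) := by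
  obtain ⟨A, y, h, hA, hA_tri, hy, hh, C, hC, hbound⟩ :=
    hua.exists_boundedSeq_conjugacy hF htri hd
  have hh' (j : Fin k) := mem_restrictSupport_nonlinearExponents (hh j)
  rw [← Matrix.toMvPolynomial_one] at hbound
  refine ⟨C, hC, polyMapTerm (Matrix.toMvPolynomial 1 + y),
    fun n ↦ totalDegree_map_toMvPolynomial_add_le _ hd hy,
    fun n ↦ coeff_zero_map_toMvPolynomial_add _ hy, fun n j i ↦ ?_,
    exists_norm_coeff_polyMapTerm_le _, polyMapTerm (A.toMvPolynomial + h),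
    fun n ↦ lowerTriPolyMap_map_toMvPolynomial_add _ hA_tri hh,
    ⟨d, fun n ↦ totalDegree_map_toMvPolynomial_add_le _ hd hh'⟩,
    exists_norm_coeff_polyMapTerm_le _, fun n j i ↦ ?_, hbound⟩
  · rw [polyMapTerm, coeff_single_map_toMvPolynomial_add _ hy, Matrix.one_apply,
      apply_ite (boundedSeqEval n), map_one, map_zero]
    exact if_congr eq_comm rfl rfl
  · rw [polyMapTerm, coeff_single_map_toMvPolynomial_add _ hh', ← hA]
    rfl

/-- **Proposition (bounded).** For a uniformly attracting sequence of correctly ordered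
automorphisms of `ℂ^k` and any `d ≥ 2`, there are `C > 0`, a bounded sequence `X_n` of
polynomial maps of degree `≤ d` of the form `identity + h.o.t.`, and a bounded sequence `G_n`
of lower triangular polynomial maps with `G_n'(0) = F_n'(0)`, such that
`‖G_n(X_{n-1}(z)) - X_n(F_n(z))‖ ≤ C‖z‖^{d+1}` on the unit ball (indices shifted so that
`X n` plays the role of `X_{n-1}` for the `n`-th map). -/
theorem bounded_conjugating_sequences (k : ℕ) (F : ℕ → Ck k → Ck k)
    (hauto : ∀ n, IsAutomorphism (F n)) (hfix : ∀ n, F n 0 = 0)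
    (hord : ∀ n, CorrectlyOrdered (F n)) (hua : UniformlyAttracting F)
    (d : ℕ) (hd : 2 ≤ d) :
    ∃ C : ℝ, 0 < C ∧
    ∃ X : ℕ → Fin k → MvPolynomial (Fin k) ℂ,
      (∀ n j, (X n j).totalDegree ≤ d) ∧
      (∀ n j, (X n j).coeff 0 = 0) ∧
      (∀ n (j i : Fin k), (X n j).coeff (Finsupp.single i 1) = if i = j then 1 else 0) ∧
      (∃ MX : ℝ, ∀ n j m, ‖(X n j).coeff m‖ ≤ MX) ∧
    ∃ G : ℕ → Fin k → MvPolynomial (Fin k) ℂ,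
      (∀ n, LowerTriPolyMap (G n)) ∧
      (∃ DG : ℕ, ∀ n j, (G n j).totalDegree ≤ DG) ∧
      (∃ MG : ℝ, ∀ n j m, ‖(G n j).coeff m‖ ≤ MG) ∧
      (∀ n (j i : Fin k), (G n j).coeff (Finsupp.single i 1) = derivMatrix (F n) j i) ∧
      ∀ n, ∀ z ∈ ball (0 : Ck k) 1,
        ‖evalPolyMap (G n) (evalPolyMap (X n) z) - evalPolyMap (X (n + 1)) (F n z)‖
          ≤ C * ‖z‖ ^ (d + 1) := by
  exact bounded_conjugating_sequences_general k F (fun n ↦ (hauto n).1.differentiableOn)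
    (fun n ↦ (hord n).1) hua d (by omega)
end
end
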